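/- arXiv:2605.03867 — 4 statements merged into one kernel-verified Lean document; each statement's English description precedes it below -/
import Mathlib

section
/- Let d ≥ 2 and n be positive integers, let (x_i)_{i=1}^n be independent random vectors each drawn from the uniform probability measure on the sphere of radius sqrt(d/n) in ℝ^d, and let S = Σ_{i=1}^n x_i x_i^* be the associated frame operator. Then for every ε ≥ 0, the probability that ‖S − I_d‖_op ≥ ε is at most 2d · exp( − n ε² / (2d − 2 + 2ε(d−1)/3) ). -/
open MeasureTheory ProbabilityTheory Real

noncomputable section

/-- The frame operator `S v = ∑ i, ⟪x i, v⟫ • x i` of a finite family of vectors in `ℝ^d`,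
as a continuous linear map on Euclidean space. -/
def frameOperator {d n : ℕ} (x : Fin n → EuclideanSpace ℝ (Fin d)) :
    EuclideanSpace ℝ (Fin d) →L[ℝ] EuclideanSpace ℝ (Fin d) :=
  ∑ i, (innerSL ℝ (x i)).smulRight (x i)

lemma hasDerivAt_exp_line {A : Type*} [NormedRing A] [NormedAlgebra ℝ A] [NormOneClass A]
    [CompleteSpace A] (H P : A) (t : ℝ) :
    ∃ D : A, HasDerivAt (fun s : ℝ => NormedSpace.exp (H + s • P)) D t ∧
      HasSum (fun k : ℕ => ((k.factorial : ℝ)⁻¹) • ∑ i ∈ Finset.range k,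
        (H + t • P) ^ (k - 1 - i) * P * (H + t • P) ^ i) D := by
  set R : ℝ := ‖H‖ + (|t| + 1) * ‖P‖ with hR
  have hR0 : 0 ≤ R := by positivity
  have hbase : ∀ s : ℝ, HasDerivAt (fun s : ℝ => H + s • P) P s := by
    intro s
    simpa using ((hasDerivAt_id s).smul_const P).const_add H
  let u : ℕ → ℝ := fun k => ((k.factorial : ℝ)⁻¹) * (k * (R ^ (k-1) * ‖P‖))
  have hu : Summable u := by
    rw [← summable_nat_add_iff 1]
    have : Summable fun k : ℕ => (R ^ k / k.factorial) * ‖P‖ :=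
      (Real.summable_pow_div_factorial R).mul_right _
    refine this.congr ?_
    intro k
    simp only [u, Nat.factorial_succ]
    push_cast
    have : (k.factorial : ℝ) ≠ 0 := by positivity
    have : (k + 1 : ℝ) ≠ 0 := by positivity
    field_simp
  have hK : ∀ s ∈ Metric.ball t 1, ‖H + s • P‖ ≤ R := by
    intro s hs
    rw [Metric.mem_ball, Real.dist_eq] at hs
    refine (norm_add_le _ _).trans ?_
    rw [norm_smul, Real.norm_eq_abs, hR]
    gcongr
    have := abs_add_le (s - t) t
    simp at this
    linarith
  have hbd : ∀ (k : ℕ), ∀ s ∈ Metric.ball t 1, ‖((k.factorial : ℝ)⁻¹) • ∑ i ∈ Finset.range k,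
        (H + s • P) ^ (k - 1 - i) * P * (H + s • P) ^ i‖ ≤ u k := by
    intro k s hs
    rw [norm_smul, norm_inv, Real.norm_natCast]
    simp only [u]
    gcongr
    refine (norm_sum_le _ _).trans ?_
    have : ∀ i ∈ Finset.range k, ‖(H + s • P) ^ (k - 1 - i) * P * (H + s • P) ^ i‖
        ≤ R ^ (k-1) * ‖P‖ := by
      intro i hi
      have hi := Finset.mem_range.1 hi
      calc _ ≤ ‖(H + s • P) ^ (k - 1 - i)‖ * ‖P‖ * ‖(H + s • P) ^ i‖ := norm_mul₃_le
        _ ≤ R ^ (k-1-i) * ‖P‖ * R ^ i := by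
          gcongr
          · exact (norm_pow_le _ _).trans (by gcongr; exact hK s hs)
          · exact (norm_pow_le _ _).trans (by gcongr; exact hK s hs)
        _ = R ^ (k-1-i+i) * ‖P‖ := by rw [pow_add]; ring
        _ = _ := by congr 2; omega
    refine (Finset.sum_le_sum this).trans ?_
    simp
  have htm : t ∈ Metric.ball t 1 := by simp
  refine ⟨_, ?_, (Summable.of_norm_bounded hu (fun k => hbd k t htm)).hasSum⟩
  rw [NormedSpace.exp_eq_tsum ℝ]
  refine hasDerivAt_tsum_of_isPreconnected (g := fun k s => ((k.factorial : ℝ)⁻¹) • (H + s • P) ^ k)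
    (g' := fun k s => ((k.factorial : ℝ)⁻¹) • ∑ i ∈ Finset.range k,
        (H + s • P) ^ (k - 1 - i) * P * (H + s • P) ^ i)
    hu Metric.isOpen_ball
    (convex_ball t 1).isPreconnected ?_ hbd htm ?_ htm
  · intro k s _
    have := ((hbase s).fun_pow' k).const_smul ((k.factorial : ℝ)⁻¹)
    exact this
  · exact NormedSpace.expSeries_summable' (𝕂 := ℝ) _

lemma exists_eigenbasis {d : ℕ} (K : EuclideanSpace ℝ (Fin d) →L[ℝ] EuclideanSpace ℝ (Fin d))
    (hK : (K : EuclideanSpace ℝ (Fin d) →ₗ[ℝ] EuclideanSpace ℝ (Fin d)).IsSymmetric) :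
    ∃ (b : OrthonormalBasis (Fin d) ℝ (EuclideanSpace ℝ (Fin d))) (l : Fin d → ℝ),
      ∀ a, K (b a) = l a • b a := by
  have hn : Module.finrank ℝ (EuclideanSpace ℝ (Fin d)) = d := by simp
  exact ⟨hK.eigenvectorBasis hn, hK.eigenvalues hn, fun a =>
    hK.apply_eigenvectorBasis hn a⟩

lemma pow_eigen {d : ℕ} {K : EuclideanSpace ℝ (Fin d) →L[ℝ] EuclideanSpace ℝ (Fin d)}
    {v : EuclideanSpace ℝ (Fin d)} {l : ℝ} (h : K v = l • v) (k : ℕ) :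
    (K ^ k) v = l ^ k • v := by
  induction k with
  | zero => simp
  | succ k ih =>
    rw [pow_succ, mul_apply_eq_comp, h, map_smul, ih, smul_smul, pow_succ, mul_comm]

lemma hasSum_exp_op {d : ℕ} (K : EuclideanSpace ℝ (Fin d) →L[ℝ] EuclideanSpace ℝ (Fin d)) :
    HasSum (fun n : ℕ => ((n.factorial : ℝ)⁻¹) • K ^ n) (NormedSpace.exp K) :=
  NormedSpace.exp_series_hasSum_exp' K

lemma exp_eigen {d : ℕ} {K : EuclideanSpace ℝ (Fin d) →L[ℝ] EuclideanSpace ℝ (Fin d)}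
    {v : EuclideanSpace ℝ (Fin d)} {l : ℝ} (h : K v = l • v) :
    (NormedSpace.exp K) v = Real.exp l • v := by
  have h1 := (hasSum_exp_op K).mapL (ContinuousLinearMap.apply ℝ _ v)
  have h2 : HasSum (fun n : ℕ => (((n.factorial : ℝ)⁻¹) • l ^ n)) (Real.exp l) := by
    rw [Real.exp_eq_exp_ℝ]
    exact NormedSpace.exp_series_hasSum_exp' l
  have h3 := h2.smul_const v
  refine h1.unique (h3.congr_fun ?_)
  intro n
  simp [pow_eigen h, smul_smul]

/-- quadratic form expansion in an eigenbasis -/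
lemma inner_eigen {d : ℕ} {A : EuclideanSpace ℝ (Fin d) →L[ℝ] EuclideanSpace ℝ (Fin d)}
    (b : OrthonormalBasis (Fin d) ℝ (EuclideanSpace ℝ (Fin d))) {m : Fin d → ℝ}
    (h : ∀ a, A (b a) = m a • b a) (u : EuclideanSpace ℝ (Fin d)) :
    inner ℝ u (A u) = ∑ a, m a * (inner ℝ (b a) u) ^ 2 := by
  conv_lhs => rw [← b.sum_repr' u]
  rw [map_sum]
  simp_rw [map_smul, h]
  rw [b.sum_repr' u, inner_sum]
  refine Finset.sum_congr rfl fun a _ => ?_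
  rw [inner_smul_right, inner_smul_right, real_inner_comm]
  ring

/-- trace on continuous linear maps -/
def trL (d : ℕ) : (EuclideanSpace ℝ (Fin d) →L[ℝ] EuclideanSpace ℝ (Fin d)) →L[ℝ] ℝ :=
  LinearMap.toContinuousLinearMap
    ((LinearMap.trace ℝ (EuclideanSpace ℝ (Fin d))) ∘ₗ (ContinuousLinearMap.coeLM ℝ))

lemma trL_apply {d : ℕ} (A : EuclideanSpace ℝ (Fin d) →L[ℝ] EuclideanSpace ℝ (Fin d)) :
    trL d A = LinearMap.trace ℝ _ (A : EuclideanSpace ℝ (Fin d) →ₗ[ℝ] EuclideanSpace ℝ (Fin d)) :=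
  rfl

lemma trL_mul_comm {d : ℕ} (A B : EuclideanSpace ℝ (Fin d) →L[ℝ] EuclideanSpace ℝ (Fin d)) :
    trL d (A * B) = trL d (B * A) := by
  simp only [trL_apply]
  exact LinearMap.trace_mul_comm ℝ _ _

lemma trL_eigen {d : ℕ} {A : EuclideanSpace ℝ (Fin d) →L[ℝ] EuclideanSpace ℝ (Fin d)}
    (b : OrthonormalBasis (Fin d) ℝ (EuclideanSpace ℝ (Fin d))) {m : Fin d → ℝ}
    (h : ∀ a, A (b a) = m a • b a) : trL d A = ∑ a, m a := by
  rw [trL_apply, LinearMap.trace_eq_sum_inner _ b]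
  refine Finset.sum_congr rfl fun a _ => ?_
  rw [ContinuousLinearMap.coe_coe, h, inner_smul_right]
  simp

/-- rank one operator -/
abbrev rk {d : ℕ} (u : EuclideanSpace ℝ (Fin d)) :
    EuclideanSpace ℝ (Fin d) →L[ℝ] EuclideanSpace ℝ (Fin d) := (innerSL ℝ u).smulRight u

lemma rk_apply {d : ℕ} (u v : EuclideanSpace ℝ (Fin d)) : rk u v = (inner ℝ u v : ℝ) • u := by
  simp [rk]

lemma trL_rk_mul {d : ℕ} (u : EuclideanSpace ℝ (Fin d))
    (A : EuclideanSpace ℝ (Fin d) →L[ℝ] EuclideanSpace ℝ (Fin d)) :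
    trL d (A * rk u) = inner ℝ u (A u) := by
  have : A * rk u = (innerSL ℝ u).smulRight (A u) := by
    ext v
    simp [rk]
  rw [this, trL_apply]
  exact LinearMap.trace_smulRight ((innerSL ℝ u : EuclideanSpace ℝ (Fin d) →L[ℝ] ℝ) : EuclideanSpace ℝ (Fin d) →ₗ[ℝ] ℝ) (A u)

lemma rk_symm {d : ℕ} (u : EuclideanSpace ℝ (Fin d)) :
    (rk u : EuclideanSpace ℝ (Fin d) →ₗ[ℝ] EuclideanSpace ℝ (Fin d)).IsSymmetric := by
  intro x y
  simp [rk, inner_smul_left, inner_smul_right, real_inner_comm]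
  try ring

lemma moment_mul_le {d : ℕ} {K : EuclideanSpace ℝ (Fin d) →L[ℝ] EuclideanSpace ℝ (Fin d)}
    (hK : (K : EuclideanSpace ℝ (Fin d) →ₗ[ℝ] EuclideanSpace ℝ (Fin d)).IsSymmetric)
    (hpos : ∀ v, 0 ≤ inner ℝ v (K v)) (u : EuclideanSpace ℝ (Fin d)) (hu : ‖u‖ = 1) (i j : ℕ) :
    inner ℝ u ((K ^ i) u) * inner ℝ u ((K ^ j) u) ≤ inner ℝ u ((K ^ (i + j)) u) := by
  obtain ⟨b, l, hb⟩ := exists_eigenbasis K hK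
  have hl : ∀ a, 0 ≤ l a := by
    intro a
    have := hpos (b a)
    rw [hb, inner_smul_right] at this
    simpa using this
  rw [inner_eigen b (fun a => pow_eigen (hb a) i), inner_eigen b (fun a => pow_eigen (hb a) j),
    inner_eigen b (fun a => pow_eigen (hb a) (i + j))]
  set p : Fin d → ℝ := fun a => (inner ℝ (b a) u) ^ 2 with hp
  have hp0 : ∀ a, 0 ≤ p a := fun a => sq_nonneg _
  have hp1 : ∑ a, p a = 1 := by
    have := inner_eigen (A := 1) b (m := fun _ => 1) (by simp) u
    simp [hu] at this
    exact this.symm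
  have key : 0 ≤ ∑ a, ∑ c, p a * p c * ((l a ^ i - l c ^ i) * (l a ^ j - l c ^ j)) := by
    refine Finset.sum_nonneg fun a _ => Finset.sum_nonneg fun c _ => ?_
    refine mul_nonneg (mul_nonneg (hp0 a) (hp0 c)) ?_
    rcases le_total (l a) (l c) with h | h
    · exact mul_nonneg_of_nonpos_of_nonpos (sub_nonpos.2 (pow_le_pow_left₀ (hl a) h i))
        (sub_nonpos.2 (pow_le_pow_left₀ (hl a) h j))
    · exact mul_nonneg (sub_nonneg.2 (pow_le_pow_left₀ (hl c) h i))
        (sub_nonneg.2 (pow_le_pow_left₀ (hl c) h j))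
  have e1 : ∑ a, ∑ c, p a * p c * ((l a ^ i - l c ^ i) * (l a ^ j - l c ^ j)) =
      (∑ a, l a ^ (i+j) * p a) * (∑ c, p c) + (∑ a, p a) * (∑ c, l c ^ (i+j) * p c)
      - (∑ a, l a ^ i * p a) * (∑ c, l c ^ j * p c)
      - (∑ a, l a ^ j * p a) * (∑ c, l c ^ i * p c) := by
    simp only [Finset.sum_mul_sum, ← Finset.sum_add_distrib, ← Finset.sum_sub_distrib]
    refine Finset.sum_congr rfl fun a _ => Finset.sum_congr rfl fun c _ => ?_
    ring
  rw [e1, hp1] at key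
  linarith


lemma exp_add_smul_one {d : ℕ} (K : EuclideanSpace ℝ (Fin d) →L[ℝ] EuclideanSpace ℝ (Fin d))
    (hK : (K : EuclideanSpace ℝ (Fin d) →ₗ[ℝ] EuclideanSpace ℝ (Fin d)).IsSymmetric) (c : ℝ) :
    NormedSpace.exp (K + c • 1) = Real.exp c • NormedSpace.exp K := by
  obtain ⟨b, l, hb⟩ := exists_eigenbasis K hK
  have hb' : ∀ a, (K + c • (1 : EuclideanSpace ℝ (Fin d) →L[ℝ] EuclideanSpace ℝ (Fin d))) (b a)
      = (l a + c) • b a := by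
    intro a
    simp [hb, add_smul]
  refine ContinuousLinearMap.coe_injective ?_
  · refine b.toBasis.ext fun a => ?_
    simp only [OrthonormalBasis.coe_toBasis, ContinuousLinearMap.coe_coe]
    rw [exp_eigen (hb' a), smul_apply, exp_eigen (hb a), smul_smul,
      Real.exp_add, mul_comm]

lemma line_symm {d : ℕ} {H : EuclideanSpace ℝ (Fin d) →L[ℝ] EuclideanSpace ℝ (Fin d)}
    (hH : (H : EuclideanSpace ℝ (Fin d) →ₗ[ℝ] EuclideanSpace ℝ (Fin d)).IsSymmetric)
    (u : EuclideanSpace ℝ (Fin d)) (t : ℝ) :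
    ((H + t • rk u : EuclideanSpace ℝ (Fin d) →L[ℝ] EuclideanSpace ℝ (Fin d)) :
      EuclideanSpace ℝ (Fin d) →ₗ[ℝ] EuclideanSpace ℝ (Fin d)).IsSymmetric := by
  have h1 := hH
  have h2 := rk_symm u
  intro x y
  have h1 := h1 x y
  have h2 := h2 x y
  simp only [ContinuousLinearMap.coe_coe] at h1 h2
  simp only [ContinuousLinearMap.coe_coe, add_apply,
    smul_apply, inner_add_left, inner_add_right, inner_smul_left,
    inner_smul_right, h1, h2]
  simp

lemma one_symm {d : ℕ} {H : EuclideanSpace ℝ (Fin d) →L[ℝ] EuclideanSpace ℝ (Fin d)}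
    (hH : (H : EuclideanSpace ℝ (Fin d) →ₗ[ℝ] EuclideanSpace ℝ (Fin d)).IsSymmetric) (c : ℝ) :
    ((H + c • 1 : EuclideanSpace ℝ (Fin d) →L[ℝ] EuclideanSpace ℝ (Fin d)) :
      EuclideanSpace ℝ (Fin d) →ₗ[ℝ] EuclideanSpace ℝ (Fin d)).IsSymmetric := by
  intro x y
  have h1 := hH x y
  simp only [ContinuousLinearMap.coe_coe] at h1
  simp [inner_add_left, inner_add_right, inner_smul_left, inner_smul_right, h1]

lemma deriv_trace {d : ℕ} [Nontrivial (EuclideanSpace ℝ (Fin d))]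
    (H : EuclideanSpace ℝ (Fin d) →L[ℝ] EuclideanSpace ℝ (Fin d))
    (u : EuclideanSpace ℝ (Fin d)) (t : ℝ) :
    HasDerivAt (fun s : ℝ => trL d (NormedSpace.exp (H + s • rk u)))
      (inner ℝ u (NormedSpace.exp (H + t • rk u) u)) t := by
  obtain ⟨D, hD, hS⟩ := hasDerivAt_exp_line H (rk u) t
  have h1 := (trL d).hasFDerivAt.comp_hasDerivAt t hD
  have h2 := hS.mapL (trL d)
  have h3 := (hasSum_exp_op (H + t • rk u)).mapL
    ((innerSL ℝ u).comp (ContinuousLinearMap.apply ℝ (EuclideanSpace ℝ (Fin d)) u))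
  suffices h4 : trL d D = inner ℝ u (NormedSpace.exp (H + t • rk u) u) by
    rw [← h4]; exact h1
  rw [← hasSum_nat_add_iff' 1] at h2
  simp only [Finset.sum_range_one, smul_zero, map_zero, sub_zero,
    Finset.range_zero, Finset.sum_empty] at h2
  refine HasSum.unique (f := fun n => (trL d) (((n + 1).factorial : ℝ)⁻¹ •
    ∑ i ∈ Finset.range (n + 1),
      (H + t • rk u) ^ (n + 1 - 1 - i) * rk u * (H + t • rk u) ^ i)) h2 (h3.congr_fun ?_)
  intro k
  have : ∀ i ∈ Finset.range (k+1), trL d ((H + t • rk u) ^ (k + 1 - 1 - i) * rk u * (H + t • rk u) ^ i)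
      = inner ℝ u (((H + t • rk u)^k) u) := by
    intro i hi
    have hi := Finset.mem_range.1 hi
    rw [trL_mul_comm, ← mul_assoc, ← pow_add, trL_rk_mul]
    congr 3
    omega
  rw [map_smul, map_sum, Finset.sum_congr rfl this]
  simp [Nat.factorial_succ]
  have : (k + 1 : ℝ) ≠ 0 := by positivity
  field_simp

lemma deriv_quad_psd {d : ℕ} [Nontrivial (EuclideanSpace ℝ (Fin d))]
    (H : EuclideanSpace ℝ (Fin d) →L[ℝ] EuclideanSpace ℝ (Fin d))
    (hH : (H : EuclideanSpace ℝ (Fin d) →ₗ[ℝ] EuclideanSpace ℝ (Fin d)).IsSymmetric)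
    (u : EuclideanSpace ℝ (Fin d)) (hu : ‖u‖ = 1) (t : ℝ)
    (hpos : ∀ v, 0 ≤ inner ℝ v ((H + t • rk u) v)) :
    ∃ D : ℝ, HasDerivAt (fun s : ℝ => (inner ℝ u (NormedSpace.exp (H + s • rk u) u) : ℝ)) D t ∧
      D ≤ inner ℝ u (NormedSpace.exp (H + t • rk u) u) := by
  obtain ⟨D, hD, hS⟩ := hasDerivAt_exp_line H (rk u) t
  set F := ((innerSL ℝ u).comp (ContinuousLinearMap.apply ℝ (EuclideanSpace ℝ (Fin d)) u)) with hF
  have h1 := F.hasFDerivAt.comp_hasDerivAt t hD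
  refine ⟨F D, h1, ?_⟩
  have h2 := hS.mapL F
  have h3 := (hasSum_exp_op (H + t • rk u)).mapL F
  rw [← hasSum_nat_add_iff' 1] at h2
  simp only [Finset.sum_range_one, smul_zero, map_zero, sub_zero,
    Finset.range_zero, Finset.sum_empty] at h2
  refine hasSum_le ?_ h2 h3
  intro k
  have hFa : ∀ A, F A = inner ℝ u (A u) := fun A => rfl
  have : ∀ i ∈ Finset.range (k+1), F ((H + t • rk u) ^ (k + 1 - 1 - i) * rk u * (H + t • rk u) ^ i)
      ≤ inner ℝ u (((H + t • rk u)^k) u) := by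
    intro i hi
    have hi := Finset.mem_range.1 hi
    have hm := moment_mul_le (line_symm hH u t) hpos u hu i (k + 1 - 1 - i)
    rw [show i + (k + 1 - 1 - i) = k by omega] at hm
    rw [hFa, mul_apply_eq_comp, mul_apply_eq_comp, rk_apply, map_smul, inner_smul_right]
    exact hm
  rw [map_smul, map_sum, map_smul, hFa]
  have hs := Finset.sum_le_sum this
  simp only [Finset.sum_const, Finset.card_range, nsmul_eq_mul] at hs
  refine (smul_le_smul_of_nonneg_left hs (by positivity)).trans (le_of_eq ?_)
  simp [Nat.factorial_succ]
  have : (k + 1 : ℝ) ≠ 0 := by positivity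
  field_simp

lemma deriv_quad {d : ℕ} [Nontrivial (EuclideanSpace ℝ (Fin d))]
    (H : EuclideanSpace ℝ (Fin d) →L[ℝ] EuclideanSpace ℝ (Fin d))
    (hH : (H : EuclideanSpace ℝ (Fin d) →ₗ[ℝ] EuclideanSpace ℝ (Fin d)).IsSymmetric)
    (u : EuclideanSpace ℝ (Fin d)) (hu : ‖u‖ = 1) (t : ℝ) :
    ∃ D : ℝ, HasDerivAt (fun s : ℝ => (inner ℝ u (NormedSpace.exp (H + s • rk u) u) : ℝ)) D t ∧
      D ≤ inner ℝ u (NormedSpace.exp (H + t • rk u) u) := by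
  set c : ℝ := ‖H + t • rk u‖ with hc
  have e : ∀ s : ℝ, NormedSpace.exp (H + c • 1 + s • rk u)
      = Real.exp c • NormedSpace.exp (H + s • rk u) := by
    intro s
    rw [← exp_add_smul_one _ (line_symm hH u s)]
    congr 1
    abel
  obtain ⟨D, hD, hle⟩ := deriv_quad_psd (H + c • 1) (one_symm hH c) u hu t (by
    intro v
    have h1 : (H + c • 1 + t • rk u) v = (H + t • rk u) v + c • v := by
      simp; abel
    rw [h1, inner_add_right, inner_smul_right, real_inner_self_eq_norm_sq]
    have h2 := abs_real_inner_le_norm v ((H + t • rk u) v)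
    have h3 := (H + t • rk u).le_opNorm v
    have h4 := neg_abs_le (inner ℝ v ((H + t • rk u) v))
    have h5 : ‖v‖ * ‖(H + t • rk u) v‖ ≤ ‖v‖ * (c * ‖v‖) := by gcongr
    nlinarith)
  refine ⟨Real.exp (-c) * D, ?_, ?_⟩
  · have := hD.const_mul (Real.exp (-c))
    refine this.congr_of_eventuallyEq (Filter.Eventually.of_forall fun s => ?_)
    simp only [e]
    rw [smul_apply, inner_smul_right, ← mul_assoc, ← Real.exp_add]
    simp
  · rw [e, smul_apply, inner_smul_right] at hle
    calc Real.exp (-c) * D ≤ Real.exp (-c) * (Real.exp c * _) := by gcongr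
      _ = _ := by rw [← mul_assoc, ← Real.exp_add]; simp

/-- rank-one Golden–Thompson -/
lemma golden_thompson_rank_one {d : ℕ} [Nontrivial (EuclideanSpace ℝ (Fin d))]
    (H : EuclideanSpace ℝ (Fin d) →L[ℝ] EuclideanSpace ℝ (Fin d))
    (hH : (H : EuclideanSpace ℝ (Fin d) →ₗ[ℝ] EuclideanSpace ℝ (Fin d)).IsSymmetric)
    (u : EuclideanSpace ℝ (Fin d)) (hu : ‖u‖ = 1) (t : ℝ) :
    trL d (NormedSpace.exp (H + t • rk u)) ≤
      trL d (NormedSpace.exp H) + (Real.exp t - 1) * inner ℝ u (NormedSpace.exp H u) := by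
  choose D hD hle using deriv_quad H hH u hu
  set h : ℝ → ℝ := fun s : ℝ => (inner ℝ u (NormedSpace.exp (H + s • rk u) u) : ℝ) with hh
  have hA : Antitone (fun s => Real.exp (-s) * h s) := by
    have hd : ∀ s, HasDerivAt (fun s => Real.exp (-s) * h s)
        (Real.exp (-s) * (-1) * h s + Real.exp (-s) * D s) s := fun s =>
      ((hasDerivAt_neg s).exp).mul (hD s)
    refine antitone_of_deriv_nonpos (fun s => (hd s).differentiableAt) fun s => ?_
    rw [(hd s).deriv]
    have := mul_le_mul_of_nonneg_left (hle s) (Real.exp_pos (-s)).le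
    simp only [hh]
    linarith
  set G : ℝ → ℝ := fun s => trL d (NormedSpace.exp (H + s • rk u)) - Real.exp s * h 0 with hG
  have hGd : ∀ s, HasDerivAt G (h s - Real.exp s * h 0) s := fun s =>
    (deriv_trace H u s).sub ((Real.hasDerivAt_exp s).mul_const (h 0))
  have hGc : Continuous G := continuous_iff_continuousAt.2 fun s => (hGd s).continuousAt
  have hexp : ∀ s, h s = Real.exp s * (Real.exp (-s) * h s) := by
    intro s
    rw [← mul_assoc, ← Real.exp_add]; simp
  have hG0 : G t ≤ G 0 := by
    rcases le_total 0 t with ht | ht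
    · refine antitoneOn_of_deriv_nonpos (convex_Ici 0) hGc.continuousOn
        (fun s _ => (hGd s).differentiableAt.differentiableWithinAt) ?_ (by simp) ht ht
      intro s hs
      simp at hs
      rw [(hGd s).deriv, hexp s]
      have := hA hs.le
      simp only [neg_zero, Real.exp_zero, one_mul] at this
      have := mul_le_mul_of_nonneg_left this (Real.exp_pos s).le
      linarith
    · refine monotoneOn_of_deriv_nonneg (convex_Iic 0) hGc.continuousOn
        (fun s _ => (hGd s).differentiableAt.differentiableWithinAt) ?_ ht (by simp) ht
      intro s hs
      simp at hs
      rw [(hGd s).deriv, hexp s]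
      have := hA hs.le
      simp only [neg_zero, Real.exp_zero, one_mul] at this
      have := mul_le_mul_of_nonneg_left this (Real.exp_pos s).le
      linarith
  have hz : H + (0 : ℝ) • rk u = H := by ext v; simp
  simp only [hG, hh, hz, Real.exp_zero, one_mul] at hG0
  linarith


lemma rk_smul {d : ℕ} (c : ℝ) (u : EuclideanSpace ℝ (Fin d)) : rk (c • u) = (c * c) • rk u := by
  ext1 v
  rw [smul_apply, rk_apply, rk_apply, inner_smul_left, smul_smul, smul_smul]
  congr 1
  simp
  ring

lemma exp_le_bernstein (y b : ℝ) (hy : |y| ≤ b) (hb : b < 3) :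
    Real.exp y ≤ 1 + y + y ^ 2 * (1 / 2 / (1 - b / 3)) := by
  have hb0 : 0 ≤ b := (abs_nonneg y).trans hy
  have h1 : HasSum (fun n : ℕ => y ^ n / n.factorial) (Real.exp y) := by
    rw [Real.exp_eq_exp_ℝ]; exact NormedSpace.expSeries_div_hasSum_exp y
  rw [← hasSum_nat_add_iff' 2] at h1
  have h2 : HasSum (fun n : ℕ => y ^ 2 / 2 * (b / 3) ^ n) (y ^ 2 / 2 * (1 - b / 3)⁻¹) :=
    (hasSum_geometric_of_lt_one (by positivity) (by linarith)).mul_left _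
  have h3 := hasSum_le (fun n => ?_) h1 h2
  · simp [Finset.sum_range_succ] at h3
    have : y ^ 2 * (1 / 2 / (1 - b / 3)) = y ^ 2 / 2 * (1 - b / 3)⁻¹ := by ring
    linarith
  · have hf : (2 : ℝ) * 3 ^ n ≤ ((n + 2).factorial : ℝ) := by
      have : 2 * 3 ^ n ≤ (n + 2).factorial := by
        induction n with
        | zero => simp
        | succ k ih =>
          rw [show k + 1 + 2 = (k + 2) + 1 by ring, Nat.factorial_succ, pow_succ]
          nlinarith
      exact_mod_cast this
    calc y ^ (n + 2) / ((n + 2).factorial : ℝ) ≤ |y| ^ (n + 2) / ((n + 2).factorial : ℝ) := by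
          refine div_le_div_of_nonneg_right ?_ (by positivity)
          rw [← abs_pow]; exact le_abs_self _
      _ ≤ |y| ^ (n + 2) / (2 * 3 ^ n) := by gcongr
      _ = y ^ 2 / 2 * (|y| / 3) ^ n := by rw [pow_add, sq_abs, div_pow]; field_simp
      _ ≤ _ := by gcongr

/-- scalar mgf bound for the two point variable. -/
lemma mgf_bound (d : ℕ) (hd : 2 ≤ d) (s : ℝ) (b : ℝ) (hb : |s| * (d - 1) ≤ b) (hb3 : b < 3) :
    ((d - 1) + Real.exp (s * d)) / d * Real.exp (-s) ≤
      Real.exp (s ^ 2 * (d - 1) * (1 / 2 / (1 - b / 3))) := by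
  have hd' : (2 : ℝ) ≤ d := by exact_mod_cast hd
  have h1 := exp_le_bernstein (s * (d - 1)) b (by
    rw [abs_mul, abs_of_nonneg (by linarith : (0 : ℝ) ≤ d - 1)]; exact hb) hb3
  have h2 := exp_le_bernstein (-s) b (by
    rw [abs_neg]; nlinarith [abs_nonneg s]) hb3
  set C := 1 / 2 / (1 - b / 3)
  have h3 : ((d - 1) + Real.exp (s * d)) / d * Real.exp (-s)
      = ((d - 1) * Real.exp (-s) + Real.exp (s * (d - 1))) / d := by
    rw [show s * ((d : ℝ) - 1) = s * d + -s by ring, Real.exp_add]; ring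
  rw [h3]
  refine le_trans ?_ (Real.add_one_le_exp _)
  rw [div_le_iff₀ (by linarith)]
  have h4 := mul_le_mul_of_nonneg_left h2 (by linarith : (0 : ℝ) ≤ d - 1)
  calc _ ≤ (d - 1) * (1 + -s + (-s) ^ 2 * C) + (1 + s * (d - 1) + (s * (d - 1)) ^ 2 * C) :=
        add_le_add h4 h1
    _ = _ := by ring

lemma exists_ge_eigen {d : ℕ} (hd : 0 < d)
    {T : EuclideanSpace ℝ (Fin d) →L[ℝ] EuclideanSpace ℝ (Fin d)}
    (b : OrthonormalBasis (Fin d) ℝ (EuclideanSpace ℝ (Fin d))) {l : Fin d → ℝ}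
    (h : ∀ a, T (b a) = l a • b a) : ∃ a, ‖T‖ ≤ |l a| := by
  have : Nonempty (Fin d) := ⟨⟨0, hd⟩⟩
  obtain ⟨a, ha⟩ := Finite.exists_max (fun a => |l a|)
  refine ⟨a, T.opNorm_le_bound (abs_nonneg _) fun x => ?_⟩
  refine le_of_sq_le_sq ?_ (by positivity)
  have h1 : T x = ∑ c, (l c * inner ℝ (b c) x) • b c := by
    conv_lhs => rw [← b.sum_repr' x, map_sum]
    refine Finset.sum_congr rfl fun c _ => ?_
    rw [map_smul, h, smul_smul, mul_comm]
  have h2 : ∀ c, inner ℝ (b c) (T x) = l c * inner ℝ (b c) x := by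
    intro c
    rw [h1, b.orthonormal.inner_right_fintype]
  rw [← b.sum_sq_norm_inner_right (T x), mul_pow, ← b.sum_sq_norm_inner_right x, Finset.mul_sum]
  refine Finset.sum_le_sum fun c _ => ?_
  rw [h2, norm_mul, mul_pow]
  gcongr
  exact ha c

lemma trace_exp_nonneg {d : ℕ} (K : EuclideanSpace ℝ (Fin d) →L[ℝ] EuclideanSpace ℝ (Fin d))
    (hK : (K : EuclideanSpace ℝ (Fin d) →ₗ[ℝ] EuclideanSpace ℝ (Fin d)).IsSymmetric) :
    0 ≤ trL d (NormedSpace.exp K) := by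
  obtain ⟨b, l, hb⟩ := exists_eigenbasis K hK
  rw [trL_eigen b fun a => exp_eigen (hb a)]
  exact Finset.sum_nonneg fun a _ => (Real.exp_pos _).le

lemma exp_le_trace {d : ℕ} (hd : 0 < d)
    (T : EuclideanSpace ℝ (Fin d) →L[ℝ] EuclideanSpace ℝ (Fin d))
    (hT : (T : EuclideanSpace ℝ (Fin d) →ₗ[ℝ] EuclideanSpace ℝ (Fin d)).IsSymmetric)
    (ε θ : ℝ) (hθ : 0 ≤ θ) (h : ε ≤ ‖T‖) :
    Real.exp (θ * ε) ≤ trL d (NormedSpace.exp (θ • T)) + trL d (NormedSpace.exp ((-θ) • T)) := by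
  obtain ⟨b, l, hb⟩ := exists_eigenbasis T hT
  have hb' : ∀ (c : ℝ) a, (c • T) (b a) = (c * l a) • b a := by
    intro c a; rw [smul_apply, hb, smul_smul]
  rw [trL_eigen b fun a => exp_eigen (hb' θ a), trL_eigen b fun a => exp_eigen (hb' (-θ) a)]
  obtain ⟨a, ha⟩ := exists_ge_eigen hd b hb
  have hp : ∀ c : ℝ, Real.exp (c * l a) ≤ ∑ a, Real.exp (c * l a) := fun c =>
    Finset.single_le_sum (f := fun a => Real.exp (c * l a)) (fun a _ => (Real.exp_pos _).le)
      (Finset.mem_univ a)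
  have hn : ∀ c : ℝ, 0 ≤ ∑ a, Real.exp (c * l a) := fun c => (Real.exp_pos _).le.trans (hp c)
  have hle : θ * ε ≤ θ * |l a| := by gcongr; exact h.trans ha
  refine (Real.exp_le_exp.2 hle).trans ?_
  rcases abs_choice (l a) with h | h <;> rw [h]
  · exact (hp θ).trans (le_add_of_nonneg_right (hn _))
  · rw [show θ * -l a = -θ * l a by ring]
    exact (hp (-θ)).trans (le_add_of_nonneg_left (hn _))

lemma second_moment (d : ℕ) (hd : 0 < d) (r : ℝ)
    (μ : Measure (EuclideanSpace ℝ (Fin d))) [IsProbabilityMeasure μ]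
    (hae : ∀ᵐ x ∂μ, ‖x‖ ^ 2 = r)
    (hinv : ∀ Q : EuclideanSpace ℝ (Fin d) ≃ₗᵢ[ℝ] EuclideanSpace ℝ (Fin d),
      Measure.map (⇑Q) μ = μ)
    (A : EuclideanSpace ℝ (Fin d) →L[ℝ] EuclideanSpace ℝ (Fin d))
    (b : OrthonormalBasis (Fin d) ℝ (EuclideanSpace ℝ (Fin d))) (m : Fin d → ℝ)
    (h : ∀ a, A (b a) = m a • b a) :
    Integrable (fun x => (inner ℝ x (A x) : ℝ)) μ ∧
    ∫ x, (inner ℝ x (A x) : ℝ) ∂μ = r / d * trL d A := by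
  have hint : ∀ a, Integrable (fun x => (inner ℝ (b a) x : ℝ) ^ 2) μ := by
    intro a
    refine Integrable.of_bound (C := r) (by fun_prop) ?_
    filter_upwards [hae] with x hx
    rw [Real.norm_of_nonneg (sq_nonneg _), ← hx, ← sq_abs]
    have := abs_real_inner_le_norm (b a) x
    rw [b.norm_eq_one, one_mul] at this
    gcongr
  have heq : ∀ a c, ∫ x, (inner ℝ (b a) x : ℝ) ^ 2 ∂μ = ∫ x, (inner ℝ (b c) x : ℝ) ^ 2 ∂μ := by
    intro a c
    set Q := b.equiv b (Equiv.swap a c) with hQ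
    have hQa : Q (b a) = b c := by simp [hQ]
    conv_rhs => rw [← hinv Q]
    rw [integral_map Q.continuous.aemeasurable (by fun_prop)]
    congr 1
    funext x
    rw [← hQa, Q.inner_map_map]
  have hsum : ∑ a, ∫ x, (inner ℝ (b a) x : ℝ) ^ 2 ∂μ = r := by
    rw [← integral_finsetSum _ fun a _ => hint a]
    have : ∀ᵐ x ∂μ, ∑ a, (inner ℝ (b a) x : ℝ) ^ 2 = r := by
      filter_upwards [hae] with x hx
      rw [← hx, ← b.sum_sq_norm_inner_right x]
      simp
    rw [integral_congr_ae this]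
    simp
  have hd0 : (d : ℝ) ≠ 0 := by positivity
  have hval : ∀ a, ∫ x, (inner ℝ (b a) x : ℝ) ^ 2 ∂μ = r / d := by
    intro a
    rw [Finset.sum_congr rfl fun c _ => heq c a] at hsum
    simp at hsum
    field_simp
    linarith
  have hfun : (fun x => (inner ℝ x (A x) : ℝ)) = fun x => ∑ a, m a * (inner ℝ (b a) x) ^ 2 := by
    funext x; exact inner_eigen b h x
  rw [hfun]
  refine ⟨integrable_finsetSum _ fun a _ => (hint a).const_mul _, ?_⟩
  rw [integral_finsetSum _ fun a _ => (hint a).const_mul _, trL_eigen b h, Finset.mul_sum]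
  refine Finset.sum_congr rfl fun a _ => ?_
  rw [integral_const_mul, hval, mul_comm]

lemma step_bound (d : ℕ) [Nontrivial (EuclideanSpace ℝ (Fin d))] (hd : 0 < d) (r : ℝ) (hr : 0 < r)
    (μ : Measure (EuclideanSpace ℝ (Fin d))) [IsProbabilityMeasure μ]
    (hae : ∀ᵐ x ∂μ, ‖x‖ ^ 2 = r)
    (hinv : ∀ Q : EuclideanSpace ℝ (Fin d) ≃ₗᵢ[ℝ] EuclideanSpace ℝ (Fin d),
      Measure.map (⇑Q) μ = μ) (θ : ℝ)
    (H : EuclideanSpace ℝ (Fin d) →L[ℝ] EuclideanSpace ℝ (Fin d))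
    (hH : (H : EuclideanSpace ℝ (Fin d) →ₗ[ℝ] EuclideanSpace ℝ (Fin d)).IsSymmetric) :
    ∫⁻ x, ENNReal.ofReal (trL d (NormedSpace.exp (H + θ • rk x))) ∂μ ≤
      ENNReal.ofReal (((d - 1) + Real.exp (θ * r)) / d * trL d (NormedSpace.exp H)) := by
  obtain ⟨b, l, hb⟩ := exists_eigenbasis H hH
  obtain ⟨hi, hv⟩ := second_moment d hd r μ hae hinv (NormedSpace.exp H) b _
    (fun a => exp_eigen (hb a))
  set q : EuclideanSpace ℝ (Fin d) → ℝ := fun x => trL d (NormedSpace.exp H) +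
    (Real.exp (θ * r) - 1) / r * inner ℝ x (NormedSpace.exp H x) with hq
  have hle : ∀ᵐ x ∂μ, trL d (NormedSpace.exp (H + θ • rk x)) ≤ q x := by
    filter_upwards [hae] with x hx
    obtain ⟨u, hu⟩ : ∃ u, u = (√r)⁻¹ • x := ⟨_, rfl⟩
    have hsr : √r * √r = r := Real.mul_self_sqrt hr.le
    have hs0 : 0 < √r := Real.sqrt_pos.2 hr
    have hxn : ‖x‖ = √r := by rw [← hx, Real.sqrt_sq (norm_nonneg _)]
    have hu1 : ‖u‖ = 1 := by
      rw [hu, norm_smul, norm_inv, Real.norm_of_nonneg hs0.le, hxn]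
      field_simp
    have hrk : θ • rk x = (θ * r) • rk u := by
      have hxu : x = √r • u := by rw [hu, smul_smul, mul_inv_cancel₀ hs0.ne', one_smul]
      rw [hxu, rk_smul, smul_smul, hsr]
    have := golden_thompson_rank_one H hH u hu1 (θ * r)
    rw [hrk]
    refine this.trans (le_of_eq ?_)
    simp only [hq, hu, map_smul, inner_smul_left, inner_smul_right]
    simp
    field_simp
    rw [pow_two, hsr]
    try ring
  have hqi : Integrable q μ := (integrable_const _).add (hi.const_mul _)
  have hq0 : 0 ≤ᵐ[μ] q := by
    filter_upwards [hle] with x hx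
    exact (trace_exp_nonneg _ (line_symm hH x θ)).trans hx
  calc _ ≤ ∫⁻ x, ENNReal.ofReal (q x) ∂μ := by
        refine lintegral_mono_ae ?_
        filter_upwards [hle] with x hx
        exact ENNReal.ofReal_le_ofReal hx
    _ = ENNReal.ofReal (∫ x, q x ∂μ) := (ofReal_integral_eq_lintegral_ofReal hqi hq0).symm
    _ = _ := by
        congr 1
        simp only [hq]
        rw [integral_add (integrable_const _) (hi.const_mul _), integral_const_mul, hv]
        simp
        field_simp
        ring

lemma shift_eq {d : ℕ} (c : ℝ) (S : EuclideanSpace ℝ (Fin d) →L[ℝ] EuclideanSpace ℝ (Fin d)) :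
    c • (S - 1) = (-c) • 1 + c • S := by
  ext1 v
  simp only [smul_apply, sub_apply, add_apply, one_apply_eq_self]
  rw [smul_sub, neg_smul, sub_eq_neg_add]

lemma frame_symm {d m : ℕ} (x : Fin m → EuclideanSpace ℝ (Fin d)) :
    (frameOperator x : EuclideanSpace ℝ (Fin d) →ₗ[ℝ] EuclideanSpace ℝ (Fin d)).IsSymmetric := by
  intro v w
  simp only [ContinuousLinearMap.coe_coe, frameOperator, sum_apply,
    sum_inner, inner_sum]
  exact Finset.sum_congr rfl fun i _ => rk_symm (x i) v w

lemma frame_continuous (d m : ℕ) :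
    Continuous (fun x : Fin m → EuclideanSpace ℝ (Fin d) => frameOperator x) := by
  unfold frameOperator
  refine continuous_finsetSum _ fun i _ => ?_
  have h : Continuous fun x : Fin m → EuclideanSpace ℝ (Fin d) =>
      ContinuousLinearMap.smulRightL ℝ (EuclideanSpace ℝ (Fin d)) (EuclideanSpace ℝ (Fin d))
        (innerSL ℝ (x i)) (x i) := by fun_prop
  exact h

lemma trace_continuous (d m : ℕ) (θ : ℝ)
    (H : EuclideanSpace ℝ (Fin d) →L[ℝ] EuclideanSpace ℝ (Fin d)) :
    Continuous (fun x : Fin m → EuclideanSpace ℝ (Fin d) =>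
      trL d (NormedSpace.exp (H + θ • frameOperator x))) := by
  have h1 := frame_continuous d m
  let _ : NormedAlgebra ℚ (EuclideanSpace ℝ (Fin d) →L[ℝ] EuclideanSpace ℝ (Fin d)) :=
    NormedAlgebra.restrictScalars ℚ ℝ _
  have h2 : Continuous (NormedSpace.exp :
    (EuclideanSpace ℝ (Fin d) →L[ℝ] EuclideanSpace ℝ (Fin d)) → _) := NormedSpace.exp_continuous
  exact (trL d).continuous.comp (h2.comp (continuous_const.add (h1.const_smul θ)))

lemma iter_bound (d : ℕ) [Nontrivial (EuclideanSpace ℝ (Fin d))] (hd : 0 < d) (r : ℝ) (hr : 0 < r)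
    (μ : Measure (EuclideanSpace ℝ (Fin d))) [IsProbabilityMeasure μ]
    (hae : ∀ᵐ x ∂μ, ‖x‖ ^ 2 = r)
    (hinv : ∀ Q : EuclideanSpace ℝ (Fin d) ≃ₗᵢ[ℝ] EuclideanSpace ℝ (Fin d),
      Measure.map (⇑Q) μ = μ) (θ : ℝ) (m : ℕ) :
    ∀ (H : EuclideanSpace ℝ (Fin d) →L[ℝ] EuclideanSpace ℝ (Fin d))
    (_ : (H : EuclideanSpace ℝ (Fin d) →ₗ[ℝ] EuclideanSpace ℝ (Fin d)).IsSymmetric),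
    ∫⁻ x, ENNReal.ofReal (trL d (NormedSpace.exp (H + θ • frameOperator x)))
        ∂(Measure.pi fun _ : Fin m => μ) ≤
      ENNReal.ofReal ((((d - 1) + Real.exp (θ * r)) / d) ^ m * trL d (NormedSpace.exp H)) := by
  have hd1 : (1 : ℝ) ≤ d := by exact_mod_cast hd
  set c : ℝ := ((d - 1) + Real.exp (θ * r)) / d with hc
  have hc0 : 0 ≤ c := div_nonneg (add_nonneg (by linarith) (Real.exp_pos _).le) (by linarith)
  induction m with
  | zero =>
    intro H hH
    simp [frameOperator]
  | succ m ih =>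
    intro H hH
    have hmp := (measurePreserving_piFinSuccAbove (fun _ : Fin (m+1) => μ) 0).symm
    have hmeas : Measurable fun x : Fin (m+1) → EuclideanSpace ℝ (Fin d) =>
        ENNReal.ofReal (trL d (NormedSpace.exp (H + θ • frameOperator x))) :=
      (trace_continuous d (m+1) θ H).measurable.ennreal_ofReal
    rw [← hmp.lintegral_comp hmeas]
    rw [lintegral_prod _ (by exact (hmeas.comp hmp.measurable).aemeasurable)]
    have hfr : ∀ (x : EuclideanSpace ℝ (Fin d)) (y : Fin m → EuclideanSpace ℝ (Fin d)),
        H + θ • frameOperator ((MeasurableEquiv.piFinSuccAbove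
          (fun _ : Fin (m+1) => EuclideanSpace ℝ (Fin d)) 0).symm (x, y)) =
        (H + θ • rk x) + θ • frameOperator y := by
      intro x y
      have h1 : frameOperator ((MeasurableEquiv.piFinSuccAbove
          (fun _ : Fin (m+1) => EuclideanSpace ℝ (Fin d)) 0).symm (x, y)) =
          rk x + frameOperator y := by
        simp [frameOperator, Fin.sum_univ_succ, MeasurableEquiv.piFinSuccAbove_symm_apply,
          Fin.insertNthEquiv]
      rw [h1]
      ext1 v
      simp only [smul_apply, add_apply]
      rw [smul_add, add_assoc]
    calc _ ≤ ∫⁻ x, ENNReal.ofReal (c ^ m * trL d (NormedSpace.exp (H + θ • rk x))) ∂μ := by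
          refine lintegral_mono fun x => ?_
          simp only [hfr]
          exact ih (H + θ • rk x) (line_symm hH x θ)
      _ = ENNReal.ofReal (c ^ m) *
          ∫⁻ x, ENNReal.ofReal (trL d (NormedSpace.exp (H + θ • rk x))) ∂μ := by
          rw [← lintegral_const_mul' _ _ ENNReal.ofReal_ne_top]
          simp_rw [ENNReal.ofReal_mul (pow_nonneg hc0 m)]
      _ ≤ ENNReal.ofReal (c ^ m) * ENNReal.ofReal (c * trL d (NormedSpace.exp H)) := by
          gcongr
          exact step_bound d hd r hr μ hae hinv θ H hH
      _ = _ := by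
          rw [← ENNReal.ofReal_mul (pow_nonneg hc0 m)]
          congr 1
          ring

lemma centered_bound (d n : ℕ) [Nontrivial (EuclideanSpace ℝ (Fin d))] (hd : 2 ≤ d) (hn : 0 < n)
    (μ : Measure (EuclideanSpace ℝ (Fin d))) [IsProbabilityMeasure μ]
    (hae : ∀ᵐ x ∂μ, ‖x‖ ^ 2 = (d / n : ℝ))
    (hinv : ∀ Q : EuclideanSpace ℝ (Fin d) ≃ₗᵢ[ℝ] EuclideanSpace ℝ (Fin d),
      Measure.map (⇑Q) μ = μ) (s b : ℝ) (hb : |s| * (d - 1) ≤ b) (hb3 : b < 3) :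
    ∫⁻ x, ENNReal.ofReal (trL d (NormedSpace.exp ((n * s) • (frameOperator x - 1))))
        ∂(Measure.pi fun _ : Fin n => μ) ≤
      ENNReal.ofReal (d * Real.exp (n * (s ^ 2 * (d - 1) * (1 / 2 / (1 - b / 3))))) := by
  have hd1 : (2 : ℝ) ≤ d := by exact_mod_cast hd
  have hn0 : (0 : ℝ) < n := by exact_mod_cast hn
  have h0 : ((0 : EuclideanSpace ℝ (Fin d) →L[ℝ] EuclideanSpace ℝ (Fin d)) :
      EuclideanSpace ℝ (Fin d) →ₗ[ℝ] EuclideanSpace ℝ (Fin d)).IsSymmetric := by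
    intro x y; simp
  have h1 := iter_bound d (by omega) (d / n : ℝ) (by positivity) μ hae hinv (n * s) n
    ((-(n * s)) • 1) (by simpa using one_symm h0 (-(n * s)))
  have h2 : trL d (NormedSpace.exp ((-(n * s : ℝ)) • 1)) = d * Real.exp (-(n * s)) := by
    have hb : ∀ a, ((-(n * s : ℝ)) • (1 : EuclideanSpace ℝ (Fin d) →L[ℝ] EuclideanSpace ℝ (Fin d)))
      (EuclideanSpace.basisFun (Fin d) ℝ a) = (-(n * s : ℝ)) • (EuclideanSpace.basisFun (Fin d) ℝ a) := by
      intro a; simp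
    rw [trL_eigen _ fun a => exp_eigen (hb a)]
    simp
  rw [h2] at h1
  have h3 : ∀ x : Fin n → EuclideanSpace ℝ (Fin d), (n * s) • (frameOperator x - 1) =
      (-(n * s)) • 1 + (n * s) • frameOperator x := by
    intro x
    exact shift_eq _ _
  simp only [h3]
  refine h1.trans (ENNReal.ofReal_le_ofReal ?_)
  have hm := mgf_bound d hd s b hb hb3
  rw [show n * s * (d / n : ℝ) = s * d by field_simp,
    show -(n * s) = (n : ℝ) * (-s) by ring, Real.exp_nat_mul, Real.exp_nat_mul, mul_left_comm,
    ← mul_pow]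
  have : 0 ≤ ((d - 1) + Real.exp (s * d)) / d * Real.exp (-s) := by
    have : (0 : ℝ) ≤ d - 1 := by linarith
    positivity
  gcongr

/-- **Concentration over the sphere, operator norm.**
If `x₁, …, xₙ` are i.i.d. uniform on the sphere of radius `√(d/n)` in `ℝ^d` (their joint law
being the `n`-fold product of the uniform probability measure `μ` on that sphere, where `μ`
is characterized as a rotation-invariant probability measure supported on the sphere), then
for every `ε ≥ 0`,
`ℙ(‖S - I‖_op ≥ ε) ≤ 2d · exp(-nε² / (2d - 2 + 2ε(d-1)/3))`. -/
theorem sphere_concentration_opNorm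
    (d n : ℕ) (hd : 2 ≤ d) (hn : 0 < n)
    (μ : Measure (EuclideanSpace ℝ (Fin d))) [IsProbabilityMeasure μ]
    (hsupp : μ (Metric.sphere (0 : EuclideanSpace ℝ (Fin d)) (Real.sqrt (d / n))) = 1)
    (hinv : ∀ Q : EuclideanSpace ℝ (Fin d) ≃ₗᵢ[ℝ] EuclideanSpace ℝ (Fin d),
      Measure.map (⇑Q) μ = μ)
    (ε : ℝ) (hε : 0 ≤ ε) :
    (Measure.pi fun _ : Fin n => μ)
        {x | ε ≤ ‖frameOperator x - 1‖}
      ≤ ENNReal.ofReal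
          (2 * d * Real.exp (-(n * ε ^ 2) / (2 * d - 2 + 2 * ε * (d - 1) / 3))) := by
  have : NeZero d := ⟨by omega⟩
  have : Nonempty (Fin d) := ⟨0⟩
  have : Nontrivial (EuclideanSpace ℝ (Fin d)) := inferInstance
  have hd1 : (2 : ℝ) ≤ d := by exact_mod_cast hd
  have hn0 : (0 : ℝ) < n := by exact_mod_cast hn
  have hae : ∀ᵐ x ∂μ, ‖x‖ ^ 2 = (d / n : ℝ) := by
    have h1 : ∀ᵐ x ∂μ, x ∈ Metric.sphere (0 : EuclideanSpace ℝ (Fin d)) (Real.sqrt (d / n)) :=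
      (mem_ae_iff_prob_eq_one Metric.isClosed_sphere.measurableSet).2 hsupp
    filter_upwards [h1] with x hx
    rw [mem_sphere_zero_iff_norm] at hx
    rw [hx, Real.sq_sqrt (by positivity)]
  have hL : (0 : ℝ) < d - 1 := by linarith
  set s : ℝ := ε / ((d - 1) * (1 + ε / 3)) with hs
  have hs0 : 0 ≤ s := by positivity
  set b : ℝ := s * (d - 1) with hb
  have hbv : b = ε / (1 + ε / 3) := by rw [hb, hs]; field_simp
  have hb3 : b < 3 := by rw [hbv, div_lt_iff₀ (by positivity)]; linarith
  have hcp := centered_bound d n hd hn μ hae hinv s b (by rw [abs_of_nonneg hs0]) hb3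
  have hcm := centered_bound d n hd hn μ hae hinv (-s) b (by rw [abs_neg, abs_of_nonneg hs0]) hb3
  rw [neg_sq] at hcm
  set V : ℝ := d * Real.exp (n * (s ^ 2 * (d - 1) * (1 / 2 / (1 - b / 3)))) with hV
  set F : ℝ → (Fin n → EuclideanSpace ℝ (Fin d)) → ENNReal := fun t x =>
    ENNReal.ofReal (trL d (NormedSpace.exp ((n * t) • (frameOperator x - 1)))) with hF
  have hFm : ∀ t, Measurable (F t) := by
    intro t
    have h3 : ∀ x : Fin n → EuclideanSpace ℝ (Fin d), (n * t) • (frameOperator x - 1) =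
        (-(n * t)) • 1 + (n * t) • frameOperator x := by
      intro x
      exact shift_eq _ _
    simp only [hF, h3]
    exact (trace_continuous d n (n * t) _).measurable.ennreal_ofReal
  have hsub : {x : Fin n → EuclideanSpace ℝ (Fin d) | ε ≤ ‖frameOperator x - 1‖} ⊆
      {x | ENNReal.ofReal (Real.exp (n * s * ε)) ≤ F s x + F (-s) x} := by
    intro x hx
    have hT : ((frameOperator x - 1 : EuclideanSpace ℝ (Fin d) →L[ℝ] EuclideanSpace ℝ (Fin d)) :
        EuclideanSpace ℝ (Fin d) →ₗ[ℝ] EuclideanSpace ℝ (Fin d)).IsSymmetric := by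
      have := one_symm (frame_symm x) (-1)
      have he : frameOperator x - 1 = frameOperator x + (-1 : ℝ) • 1 := by
        ext1 v
        simp [sub_eq_add_neg]
      rw [he]
      exact this
    have h1 := exp_le_trace (by omega) _ hT ε (n * s) (by positivity) hx
    refine (ENNReal.ofReal_le_ofReal h1).trans ?_
    refine ENNReal.ofReal_add_le.trans (le_of_eq ?_)
    simp only [hF, mul_neg]
  refine (measure_mono hsub).trans ?_
  have hpos : ENNReal.ofReal (Real.exp (n * s * ε)) ≠ 0 := by
    simp [Real.exp_pos]
  refine (meas_ge_le_lintegral_div ((hFm s).add (hFm (-s))).aemeasurable hpos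
    ENNReal.ofReal_ne_top).trans ?_
  simp only [Pi.add_apply]
  rw [lintegral_add_left (hFm s)]
  refine (ENNReal.div_le_div_right (add_le_add hcp hcm) _).trans ?_
  have hV0 : 0 ≤ V := by positivity
  rw [← ENNReal.ofReal_add hV0 hV0, ← ENNReal.ofReal_div_of_pos (Real.exp_pos _)]
  refine ENNReal.ofReal_le_ofReal (le_of_eq ?_)
  rw [hV, ← two_mul, ← mul_assoc, mul_div_assoc, ← Real.exp_sub]
  congr 2
  have e1 : 1 - b / 3 = 1 / (1 + ε / 3) := by rw [hbv]; field_simp; ring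
  rw [e1, hs]
  have : (2 * d - 2 + 2 * ε * (d - 1) / 3 : ℝ) = 2 * ((d - 1) * (1 + ε / 3)) := by ring
  rw [this]
  field_simp
  ring
end
end

section
/- Let d ≥ 2 and n be positive integers, let (x_i)_{i=1}^n be independent random vectors each drawn from the uniform probability measure on the sphere of radius sqrt(d/n) in ℝ^d, and let S = Σ_{i=1}^n x_i x_i^* be the associated frame operator. Then for every ε ≥ 0, the probability that ‖S − I_d‖_F ≥ ε is at most 2d² · exp( − (d−1) n ε² / (8 d⁴) ). -/
open MeasureTheory ProbabilityTheory Real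

noncomputable section

/-- The Frobenius (Hilbert–Schmidt) norm of `S - I_d`, where
`S = ∑ i, x_i x_i^*` is the frame operator of the family `x`; entrywise,
`S j k = ∑ i, x i j * x i k`. -/
def frobNormFrameOpSubId {d n : ℕ} (x : Fin n → EuclideanSpace ℝ (Fin d)) : ℝ :=
  Real.sqrt (∑ j : Fin d, ∑ k : Fin d,
    ((∑ i : Fin n, x i j * x i k) - (if j = k then (1 : ℝ) else 0)) ^ 2)


lemma exists_rot {d : ℕ} (j k : Fin d) (hjk : j ≠ k) (c σ : ℝ) (h : c ^ 2 + σ ^ 2 = 1) :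
    ∃ Q : EuclideanSpace ℝ (Fin d) ≃ₗᵢ[ℝ] EuclideanSpace ℝ (Fin d),
      ∀ x, (Q x) j = c * x j + σ * x k ∧ (Q x) k = c * x k - σ * x j := by
  let L : EuclideanSpace ℝ (Fin d) →ₗ[ℝ] EuclideanSpace ℝ (Fin d) :=
    { toFun := fun x => x + ((c * x j + σ * x k - x j) • EuclideanSpace.single j (1:ℝ)
        + (c * x k - σ * x j - x k) • EuclideanSpace.single k (1:ℝ))
      map_add' := by
        intro x y
        ext i
        simp
        split_ifs <;> ring
      map_smul' := by
        intro r x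
        ext i
        simp
        ring }
  have hL : ∀ x, ‖L x‖ = ‖x‖ := by
    intro x
    have : ‖L x‖ ^ 2 = ‖x‖ ^ 2 := by
      simp only [L, LinearMap.coe_mk, AddHom.coe_mk]
      rw [norm_add_sq_real, norm_add_sq_real]
      simp only [inner_add_right, inner_smul_right, inner_smul_left, norm_smul, mul_pow,
        PiLp.norm_single, EuclideanSpace.inner_single_right]
      simp [hjk.symm]
      linear_combination ((x j)^2 + (x k)^2) * h
    exact (sq_eq_sq₀ (norm_nonneg _) (norm_nonneg _)).1 this
  refine ⟨LinearIsometry.toLinearIsometryEquiv ⟨L, hL⟩ rfl, fun x => ?_⟩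
  simp only [LinearIsometry.coe_toLinearIsometryEquiv]
  constructor
  · simp [L, hjk]
  · simp [L, hjk.symm]

lemma integral_rot {d : ℕ} (μ : Measure (EuclideanSpace ℝ (Fin d)))
    (hinv : ∀ Q : EuclideanSpace ℝ (Fin d) ≃ₗᵢ[ℝ] EuclideanSpace ℝ (Fin d),
      Measure.map (⇑Q) μ = μ) (j k : Fin d) (hjk : j ≠ k) (f : ℝ → ℝ → ℝ) (c σ : ℝ)
      (h : c ^ 2 + σ ^ 2 = 1) :
    ∫ x, f (c * x j + σ * x k) (c * x k - σ * x j) ∂μ = ∫ x, f (x j) (x k) ∂μ := by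
  obtain ⟨Q, hQ⟩ := exists_rot j k hjk c σ h
  have := Q.toHomeomorph.measurableEmbedding.integral_map (μ := μ) (fun x => f (x j) (x k))
  have h2 : Measure.map (⇑Q.toHomeomorph) μ = μ := hinv Q
  rw [h2] at this
  rw [this]
  congr 1
  ext x
  have e : Q.toHomeomorph x = Q x := rfl
  rw [e, (hQ x).1, (hQ x).2]

lemma stein {d : ℕ} (μ : Measure (EuclideanSpace ℝ (Fin d))) [IsProbabilityMeasure μ] (R : ℝ)
    (hS : ∀ᵐ x ∂μ, ∑ i, (x i) ^ 2 = R)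
    (hinv : ∀ Q : EuclideanSpace ℝ (Fin d) ≃ₗᵢ[ℝ] EuclideanSpace ℝ (Fin d),
      Measure.map (⇑Q) μ = μ) (j k : Fin d) (hjk : j ≠ k) (s : ℝ) :
    ∫ x, ((x k) ^ 2 - (x j) ^ 2 + 2 * s * (x j) ^ 2 * (x k) ^ 2) * exp (s * (x j) ^ 2) ∂μ = 0 := by
  let A : EuclideanSpace ℝ (Fin d) → ℝ → ℝ := fun x t => cos t * x j + sin t * x k
  let B : EuclideanSpace ℝ (Fin d) → ℝ → ℝ := fun x t => cos t * x k - sin t * x j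
  have hAc : ∀ t, Continuous (fun x => A x t) := by intro t; fun_prop
  have hBc : ∀ t, Continuous (fun x => B x t) := by intro t; fun_prop
  have hA : ∀ x t, HasDerivAt (A x) (B x t) t := by
    intro x t
    have := ((hasDerivAt_cos t).mul_const (x j)).add ((hasDerivAt_sin t).mul_const (x k))
    refine this.congr_deriv ?_
    simp only [B]; ring
  have hB : ∀ x t, HasDerivAt (B x) (- A x t) t := by
    intro x t
    have := ((hasDerivAt_cos t).mul_const (x k)).sub ((hasDerivAt_sin t).mul_const (x j))
    refine this.congr_deriv ?_
    simp only [A]; ring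
  have hAB : ∀ᵐ x ∂μ, ∀ t, A x t ^ 2 + B x t ^ 2 ≤ R := by
    filter_upwards [hS] with x hx t
    have h1 : A x t ^ 2 + B x t ^ 2 = x j ^ 2 + x k ^ 2 := by
      simp only [A, B]
      linear_combination (x j ^ 2 + x k ^ 2) * (cos_sq_add_sin_sq t)
    rw [h1, ← hx, ← Finset.sum_pair (f := fun i => x i ^ 2) hjk]
    exact Finset.sum_le_sum_of_subset_of_nonneg (Finset.subset_univ _) (fun i _ _ => sq_nonneg _)
  let f : ℝ → EuclideanSpace ℝ (Fin d) → ℝ := fun t x => A x t * B x t * exp (s * A x t ^ 2)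
  let f' : ℝ → EuclideanSpace ℝ (Fin d) → ℝ := fun t x =>
    (B x t ^ 2 - A x t ^ 2 + 2 * s * A x t ^ 2 * B x t ^ 2) * exp (s * A x t ^ 2)
  have key := hasDerivAt_integral_of_dominated_loc_of_deriv_le (μ := μ) (F := f) (F' := f')
    (x₀ := (0:ℝ)) (s := Set.univ) (bound := fun _ => (R + R + 2 * |s| * R * R) * exp (|s| * R))
    Filter.univ_mem ?_ ?_ ?_ ?_ ?_ ?_
  · have h1 : (fun t => ∫ x, f t x ∂μ) = fun _ => ∫ x, x j * x k * exp (s * x j ^ 2) ∂μ := by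
      ext t
      exact integral_rot μ hinv j k hjk (fun a b => a * b * exp (s * a ^ 2)) (cos t) (sin t)
        (cos_sq_add_sin_sq t)
    have h2 := key.2
    rw [h1] at h2
    have h3 := h2.unique (hasDerivAt_const _ _)
    rw [← h3]
    simp [f', A, B]
  · refine Filter.Eventually.of_forall fun t => ?_
    have := hAc t
    have := hBc t
    exact Continuous.aestronglyMeasurable (by fun_prop)
  · refine Integrable.of_bound (C := R * exp (|s| * R)) ?_ ?_
    · have := hAc 0
      have := hBc 0
      exact Continuous.aestronglyMeasurable (by fun_prop)
    · filter_upwards [hAB] with x hx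
      have hx := hx 0
      simp only [f, norm_mul, Real.norm_eq_abs, abs_exp]
      have hA2 : A x 0 ^ 2 ≤ R := by nlinarith [sq_nonneg (B x 0)]
      have : s * A x 0 ^ 2 ≤ |s| * R :=
        mul_le_mul (le_abs_self s) hA2 (sq_nonneg _) (abs_nonneg _)
      have h4 : |A x 0| * |B x 0| ≤ R := by
        nlinarith [sq_nonneg (|A x 0| - |B x 0|), sq_abs (A x 0), sq_abs (B x 0), sq_nonneg (A x 0), sq_nonneg (B x 0)]
      gcongr
      exact le_trans (by positivity) h4
  · have := hAc 0
    have := hBc 0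
    exact Continuous.aestronglyMeasurable (by fun_prop)
  · filter_upwards [hAB] with x hx t _
    have hx := hx t
    have hA2 : A x t ^ 2 ≤ R := by nlinarith [sq_nonneg (B x t)]
    have hB2 : B x t ^ 2 ≤ R := by nlinarith [sq_nonneg (A x t)]
    have hR : 0 ≤ R := (sq_nonneg _).trans hA2
    have h0 : s * A x t ^ 2 ≤ |s| * R :=
        mul_le_mul (le_abs_self s) hA2 (sq_nonneg _) (abs_nonneg _)
    simp only [f', norm_mul, Real.norm_eq_abs, abs_exp]
    gcongr
    refine (abs_add_le _ _).trans ?_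
    refine add_le_add ((abs_sub _ _).trans ?_) ?_
    · rw [abs_of_nonneg (sq_nonneg _), abs_of_nonneg (sq_nonneg _)]
      exact add_le_add hB2 hA2
    · rw [abs_mul, abs_mul, abs_mul, abs_two, abs_of_nonneg (sq_nonneg (A x t)),
        abs_of_nonneg (sq_nonneg (B x t))]
      gcongr
  · exact integrable_const _
  · filter_upwards with x t _
    have := ((hA x t).mul (hB x t)).mul ((((hA x t).pow 2).const_mul s).exp)
    refine this.congr_deriv ?_
    simp only [f', Pi.mul_apply, Pi.pow_apply]
    push_cast
    ring

lemma int_cont {d : ℕ} (μ : Measure (EuclideanSpace ℝ (Fin d))) [IsProbabilityMeasure μ] (R : ℝ)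
    (hS : ∀ᵐ x ∂μ, ∑ i, (x i) ^ 2 = R) (g : EuclideanSpace ℝ (Fin d) → ℝ) (hg : Continuous g) :
    Integrable g μ := by
  have h1 : ∀ᵐ x ∂μ, x ∈ Metric.closedBall (0 : EuclideanSpace ℝ (Fin d)) (√R) := by
    filter_upwards [hS] with x hx
    rw [mem_closedBall_zero_iff, EuclideanSpace.norm_eq]
    simp [hx]
  have h2 := hg.continuousOn.integrableOn_compact (μ := μ)
    (isCompact_closedBall (0 : EuclideanSpace ℝ (Fin d)) (√R))
  rwa [IntegrableOn, Measure.restrict_eq_self_of_ae_mem h1] at h2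

lemma stein_sum {d : ℕ} (μ : Measure (EuclideanSpace ℝ (Fin d))) [IsProbabilityMeasure μ] (R : ℝ)
    (hS : ∀ᵐ x ∂μ, ∑ i, (x i) ^ 2 = R)
    (hinv : ∀ Q : EuclideanSpace ℝ (Fin d) ≃ₗᵢ[ℝ] EuclideanSpace ℝ (Fin d),
      Measure.map (⇑Q) μ = μ) (j : Fin d) (s : ℝ) :
    ∫ x, (d * (x j) ^ 2 - R) * exp (s * (x j) ^ 2) ∂μ
      = 2 * s * ∫ x, (x j) ^ 2 * (R - (x j) ^ 2) * exp (s * (x j) ^ 2) ∂μ := by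
  have h1 : ∑ k ∈ Finset.univ.erase j, ∫ x, ((x k) ^ 2 - (x j) ^ 2 + 2 * s * (x j) ^ 2 * (x k) ^ 2)
      * exp (s * (x j) ^ 2) ∂μ = 0 := by
    refine Finset.sum_eq_zero fun k hk => ?_
    exact stein μ R hS hinv j k (Finset.ne_of_mem_erase hk).symm s
  rw [← integral_finsetSum] at h1
  swap
  · intro k _
    exact int_cont μ R hS _ (by fun_prop)
  have h2 : ∀ᵐ x ∂μ, ∑ k ∈ Finset.univ.erase j, ((x k) ^ 2 - (x j) ^ 2 + 2 * s * (x j) ^ 2 * (x k) ^ 2)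
      * exp (s * (x j) ^ 2) = 2 * s * ((x j) ^ 2 * (R - (x j) ^ 2) * exp (s * (x j) ^ 2)) -
        (d * (x j) ^ 2 - R) * exp (s * (x j) ^ 2) := by
    filter_upwards [hS] with x hx
    rw [← Finset.sum_mul, Finset.sum_erase_eq_sub (Finset.mem_univ j), Finset.sum_add_distrib,
      Finset.sum_sub_distrib, ← Finset.mul_sum, hx]
    simp
    ring
  rw [integral_congr_ae h2, integral_sub, integral_const_mul] at h1
  · linarith
  · exact int_cont μ R hS _ (by fun_prop)
  · exact int_cont μ R hS _ (by fun_prop)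

lemma subG_diag {d : ℕ} (hd : 2 ≤ d) (μ : Measure (EuclideanSpace ℝ (Fin d))) [IsProbabilityMeasure μ]
    (R : ℝ) (hS : ∀ᵐ x ∂μ, ∑ i, (x i) ^ 2 = R)
    (hinv : ∀ Q : EuclideanSpace ℝ (Fin d) ≃ₗᵢ[ℝ] EuclideanSpace ℝ (Fin d),
      Measure.map (⇑Q) μ = μ) (j : Fin d) (s : ℝ) :
    mgf (fun x => (x j) ^ 2 - R / d) μ s ≤ exp ((R ^ 2 / (2 * d)) * s ^ 2 / 2) := by
  have hd0 : (0:ℝ) < d := by exact_mod_cast (by omega : 0 < d)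
  set X : EuclideanSpace ℝ (Fin d) → ℝ := fun x => (x j) ^ 2 - R / d with hX
  have hXc : Continuous X := by fun_prop
  have hint : integrableExpSet X μ = Set.univ := by
    ext t
    simp only [Set.mem_univ, iff_true]
    exact int_cont μ R hS _ (by fun_prop)
  have hder : ∀ t, HasDerivAt (mgf X μ) (∫ x, X x * exp (t * X x) ∂μ) t := by
    intro t
    refine hasDerivAt_mgf ?_
    rw [hint]; simp
  have hident : ∀ t, ∫ x, X x * exp (t * X x) ∂μ
      = t * (2 / d * ∫ x, (x j) ^ 2 * (R - (x j) ^ 2) * exp (t * X x) ∂μ) := by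
    intro t
    have e1 : ∀ x, X x * exp (t * X x)
        = (exp (- (t * (R / d))) / d) * ((d * (x j) ^ 2 - R) * exp (t * (x j) ^ 2)) := by
      intro x
      have : t * X x = - (t * (R / d)) + t * (x j) ^ 2 := by simp only [hX]; ring
      rw [this, exp_add]
      simp only [hX]
      field_simp
    have e2 : ∀ x : EuclideanSpace ℝ (Fin d), (x j) ^ 2 * (R - (x j) ^ 2) * exp (t * X x)
        = exp (- (t * (R / d))) * ((x j) ^ 2 * (R - (x j) ^ 2) * exp (t * (x j) ^ 2)) := by
      intro x
      have : t * X x = - (t * (R / d)) + t * (x j) ^ 2 := by simp only [hX]; ring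
      rw [this, exp_add]
      ring
    simp only [e1, e2]
    rw [integral_const_mul, integral_const_mul, stein_sum μ R hS hinv]
    ring
  set K : ℝ → ℝ := fun t => 2 / d * ∫ x, (x j) ^ 2 * (R - (x j) ^ 2) * exp (t * X x) ∂μ with hK
  have hKle : ∀ t, K t ≤ R ^ 2 / (2 * d) * mgf X μ t := by
    intro t
    have : ∫ x, (x j) ^ 2 * (R - (x j) ^ 2) * exp (t * X x) ∂μ ≤ ∫ x, R ^ 2 / 4 * exp (t * X x) ∂μ := by
      refine integral_mono (int_cont μ R hS _ (by fun_prop)) (int_cont μ R hS _ (by fun_prop)) ?_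
      intro x
      refine mul_le_mul_of_nonneg_right ?_ (exp_pos _).le
      nlinarith [sq_nonneg (x j ^ 2 - R / 2)]
    rw [integral_const_mul] at this
    simp only [hK]
    calc _ ≤ 2 / (d:ℝ) * (R ^ 2 / 4 * ∫ x, exp (t * X x) ∂μ) := by gcongr
      _ = _ := by simp only [mgf]; ring
  set G : ℝ → ℝ := fun t => mgf X μ t * exp (-((R ^ 2 / (2 * d)) * t ^ 2 / 2)) with hG
  have hGder : ∀ t, HasDerivAt G (t * (K t - R ^ 2 / (2 * d) * mgf X μ t)
      * exp (-((R ^ 2 / (2 * d)) * t ^ 2 / 2))) t := by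
    intro t
    have h1 := ((((hasDerivAt_pow 2 t).const_mul (R ^ 2 / (2 * d))).div_const 2).neg).exp
    have h2 := (hder t).mul h1
    refine h2.congr_deriv ?_
    rw [hident t]
    have e3 : (-fun x : ℝ => R ^ 2 / (2 * d) * x ^ 2 / 2) t = -((R ^ 2 / (2 * d)) * t ^ 2 / 2) := rfl
    have e4 : (2 / d * ∫ x, (x j) ^ 2 * (R - (x j) ^ 2) * exp (t * X x) ∂μ) = K t := rfl
    rw [e3, e4]
    push_cast
    ring
  have hG0 : G 0 = 1 := by simp [hG]
  have hGd : Differentiable ℝ G := fun t => (hGder t).differentiableAt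
  have hle : G s ≤ 1 := by
    rw [← hG0]
    rcases le_total 0 s with h | h
    · have : AntitoneOn G (Set.Ici 0) := by
        refine antitoneOn_of_deriv_nonpos (convex_Ici 0) hGd.continuous.continuousOn
          hGd.differentiableOn ?_
        intro t ht
        rw [interior_Ici, Set.mem_Ioi] at ht
        rw [(hGder t).deriv]
        refine mul_nonpos_of_nonpos_of_nonneg ?_ (exp_pos _).le
        exact mul_nonpos_of_nonneg_of_nonpos ht.le (by linarith [hKle t])
      exact this (by simp) h h
    · have : MonotoneOn G (Set.Iic 0) := by
        refine monotoneOn_of_deriv_nonneg (convex_Iic 0) hGd.continuous.continuousOn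
          hGd.differentiableOn ?_
        intro t ht
        rw [interior_Iic, Set.mem_Iio] at ht
        rw [(hGder t).deriv]
        refine mul_nonneg ?_ (exp_pos _).le
        exact mul_nonneg_of_nonpos_of_nonpos ht.le (by linarith [hKle t])
      exact this h (by simp) h
  simp only [hG] at hle
  rw [exp_neg, ← div_eq_mul_inv, div_le_one (exp_pos _)] at hle
  exact hle

lemma subG_off {d : ℕ} (hd : 2 ≤ d) (μ : Measure (EuclideanSpace ℝ (Fin d))) [IsProbabilityMeasure μ]
    (R : ℝ) (hS : ∀ᵐ x ∂μ, ∑ i, (x i) ^ 2 = R)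
    (hinv : ∀ Q : EuclideanSpace ℝ (Fin d) ≃ₗᵢ[ℝ] EuclideanSpace ℝ (Fin d),
      Measure.map (⇑Q) μ = μ) (j k : Fin d) (hjk : j ≠ k) (s : ℝ) :
    mgf (fun x => x j * x k) μ s ≤ exp ((R ^ 2 / (2 * d)) * s ^ 2 / 2) := by
  have h2 : (√2 / 2) ^ 2 = (1:ℝ) / 2 := by
    rw [div_pow, Real.sq_sqrt (by norm_num)]; norm_num
  have h1 := integral_rot μ hinv j k hjk (fun a b => exp (s * (a * b))) (√2 / 2) (√2 / 2)
    (by rw [h2]; norm_num)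
  rw [mgf, ← h1]
  have hj := subG_diag hd μ R hS hinv j (-s)
  have hk := subG_diag hd μ R hS hinv k s
  rw [neg_sq] at hj
  have h3 : ∫ x, exp (s * ((√2 / 2 * x j + √2 / 2 * x k) * (√2 / 2 * x k - √2 / 2 * x j))) ∂μ
      ≤ ∫ x, ((1:ℝ)/2 * exp (-s * (x j ^ 2 - R / d)) + 1/2 * exp (s * (x k ^ 2 - R / d))) ∂μ := by
    refine integral_mono (int_cont μ R hS _ (by fun_prop)) (int_cont μ R hS _ (by fun_prop)) ?_
    intro x
    have e : s * ((√2 / 2 * x j + √2 / 2 * x k) * (√2 / 2 * x k - √2 / 2 * x j))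
        = (1:ℝ)/2 * (-s * (x j ^ 2 - R / d)) + 1/2 * (s * (x k ^ 2 - R / d)) := by
      linear_combination (s * (x k ^ 2 - x j ^ 2)) * h2
    have := convexOn_exp.2 (Set.mem_univ (-s * (x j ^ 2 - R / d))) (Set.mem_univ (s * (x k ^ 2 - R / d)))
      (by norm_num : (0:ℝ) ≤ 1/2) (by norm_num : (0:ℝ) ≤ 1/2) (by norm_num)
    simp only [smul_eq_mul] at this
    show exp _ ≤ _
    rw [e]
    exact this
  rw [integral_add (int_cont μ R hS _ (by fun_prop)) (int_cont μ R hS _ (by fun_prop)),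
    integral_const_mul, integral_const_mul] at h3
  simp only [mgf] at hj hk
  linarith

lemma subG_all {d : ℕ} (hd : 2 ≤ d) (μ : Measure (EuclideanSpace ℝ (Fin d))) [IsProbabilityMeasure μ]
    (R : ℝ) (hS : ∀ᵐ x ∂μ, ∑ i, (x i) ^ 2 = R)
    (hinv : ∀ Q : EuclideanSpace ℝ (Fin d) ≃ₗᵢ[ℝ] EuclideanSpace ℝ (Fin d),
      Measure.map (⇑Q) μ = μ) (j k : Fin d) :
    HasSubgaussianMGF (fun x : EuclideanSpace ℝ (Fin d) => x j * x k - if j = k then R / d else 0)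
      ⟨R ^ 2 / (2 * d), by positivity⟩ μ := by
  refine ⟨fun t => int_cont μ R hS _ (by fun_prop), fun t => ?_⟩
  by_cases h : j = k
  · subst h
    have := subG_diag hd μ R hS hinv j t
    simp only [if_true, ← pow_two]
    exact this
  · have := subG_off hd μ R hS hinv j k h t
    simp only [h, if_false, sub_zero]
    exact this

lemma tail {d n : ℕ} (hd : 2 ≤ d) (hn : 0 < n) (μ : Measure (EuclideanSpace ℝ (Fin d)))
    [IsProbabilityMeasure μ]
    (f : EuclideanSpace ℝ (Fin d) → ℝ) (hf : Measurable f) (c : NNReal)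
    (hc : (c:ℝ) = (d / n : ℝ) ^ 2 / (2 * d))
    (h : HasSubgaussianMGF f c μ) (ε : ℝ) (hε : 0 ≤ ε) :
    (Measure.pi fun _ : Fin n => μ) {x | ε / d ≤ ∑ i, f (x i)} ≤
      ENNReal.ofReal (Real.exp (-((d - 1) * n * ε ^ 2) / (8 * d ^ 4))) := by
  have hd0 : (0:ℝ) < d := by exact_mod_cast (by omega : 0 < d)
  have hn0 : (0:ℝ) < n := by exact_mod_cast hn
  have hind : iIndepFun (fun (i : Fin n) (x : Fin n → EuclideanSpace ℝ (Fin d)) => f (x i))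
      (Measure.pi fun _ : Fin n => μ) := iIndepFun_pi (fun _ => hf.aemeasurable)
  have hsub : ∀ i ∈ (Finset.univ : Finset (Fin n)), HasSubgaussianMGF
      (fun x : Fin n → EuclideanSpace ℝ (Fin d) => f (x i)) c (Measure.pi fun _ : Fin n => μ) := by
    intro i _
    have hm := (measurePreserving_eval (fun _ : Fin n => μ) i)
    refine HasSubgaussianMGF.of_map (Y := Function.eval i) (X := f) hm.measurable.aemeasurable ?_
    rw [hm.map_eq]
    exact h
  have := HasSubgaussianMGF.measure_sum_ge_le_of_iIndepFun hind (c := fun _ => c) hsub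
    (ε := ε / d) (by positivity)
  rw [← ENNReal.ofReal_toReal (measure_ne_top (Measure.pi fun _ : Fin n => μ) _)]
  refine ENNReal.ofReal_le_ofReal (this.trans ?_)
  rw [exp_le_exp]
  simp only [Finset.sum_const, Finset.card_univ, Fintype.card_fin, nsmul_eq_mul, NNReal.coe_mul,
    NNReal.coe_natCast, hc]
  have e : -(ε / d) ^ 2 / (2 * (n * ((d / n : ℝ) ^ 2 / (2 * d)))) = - (8 * d * n * ε ^ 2) / (8 * d ^ 4) := by
    field_simp
  rw [e]
  gcongr
  linarith

/-- **Concentration over the sphere, Frobenius norm.**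
If `x₁, …, xₙ` are i.i.d. uniform on the sphere of radius `√(d/n)` in `ℝ^d` (their joint law
being the `n`-fold product of the uniform probability measure `μ` on that sphere, where `μ`
is characterized as a rotation-invariant probability measure supported on the sphere), then
for every `ε ≥ 0`,
`ℙ(‖S - I‖_F ≥ ε) ≤ 2d² · exp(-(d-1)nε² / (8d⁴))`. -/
theorem sphere_concentration_frobeniusNorm
    (d n : ℕ) (hd : 2 ≤ d) (hn : 0 < n)
    (μ : Measure (EuclideanSpace ℝ (Fin d))) [IsProbabilityMeasure μ]
    (hsupp : μ (Metric.sphere (0 : EuclideanSpace ℝ (Fin d)) (Real.sqrt (d / n))) = 1)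
    (hinv : ∀ Q : EuclideanSpace ℝ (Fin d) ≃ₗᵢ[ℝ] EuclideanSpace ℝ (Fin d),
      Measure.map (⇑Q) μ = μ)
    (ε : ℝ) (hε : 0 ≤ ε) :
    (Measure.pi fun _ : Fin n => μ)
        {x | ε ≤ frobNormFrameOpSubId x}
      ≤ ENNReal.ofReal
          (2 * d ^ 2 * Real.exp (-((d - 1) * n * ε ^ 2) / (8 * d ^ 4))) := by
  have hd0 : (0:ℝ) < d := by exact_mod_cast (by omega : 0 < d)
  have hn0 : (0:ℝ) < n := by exact_mod_cast hn
  have hS : ∀ᵐ x ∂μ, ∑ i, (x i) ^ 2 = (d / n : ℝ) := by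
    have h1 : ∀ᵐ x ∂μ, x ∈ Metric.sphere (0 : EuclideanSpace ℝ (Fin d)) (Real.sqrt (d / n)) :=
      (mem_ae_iff_prob_eq_one Metric.isClosed_sphere.measurableSet).2 hsupp
    filter_upwards [h1] with x hx
    rw [mem_sphere_zero_iff_norm] at hx
    have h2 := EuclideanSpace.norm_sq_eq x
    rw [hx, Real.sq_sqrt (by positivity)] at h2
    simp at h2
    exact h2.symm
  set E : ℝ := Real.exp (-((d - 1) * n * ε ^ 2) / (8 * d ^ 4)) with hE
  let f : Fin d → Fin d → EuclideanSpace ℝ (Fin d) → ℝ :=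
    fun j k x => x j * x k - if j = k then (d / n : ℝ) / d else 0
  have hfm : ∀ j k, Measurable (f j k) := by
    intro j k
    exact Continuous.measurable (by fun_prop)
  have hsub := subG_all hd μ (d / n : ℝ) hS hinv
  have hsum : ∀ (x : Fin n → EuclideanSpace ℝ (Fin d)) j k, ∑ i, f j k (x i)
      = (∑ i : Fin n, x i j * x i k) - (if j = k then (1 : ℝ) else 0) := by
    intro x j k
    simp only [f, Finset.sum_sub_distrib, Finset.sum_const, Finset.card_univ, Fintype.card_fin,
      nsmul_eq_mul]
    split_ifs
    · field_simp
    · simp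
  have hpos : ∀ j k, (Measure.pi fun _ : Fin n => μ) {x | ε / d ≤ ∑ i, f j k (x i)}
      ≤ ENNReal.ofReal E := fun j k =>
    tail hd hn μ (f j k) (hfm j k) _ rfl (hsub j k) ε hε
  have hneg : ∀ j k, (Measure.pi fun _ : Fin n => μ) {x | ε / d ≤ ∑ i, (-f j k) (x i)}
      ≤ ENNReal.ofReal E := fun j k =>
    tail hd hn μ (-f j k) (hfm j k).neg _ rfl (hsub j k).neg ε hε
  have hincl : {x : Fin n → EuclideanSpace ℝ (Fin d) | ε ≤ frobNormFrameOpSubId x} ⊆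
      ⋃ p : Fin d × Fin d, ({x | ε / d ≤ ∑ i, f p.1 p.2 (x i)} ∪
        {x | ε / d ≤ ∑ i, (-f p.1 p.2) (x i)}) := by
    intro x hx
    by_contra hcon
    simp only [Set.mem_iUnion, Set.mem_union, Set.mem_ofPred_eq, not_exists, not_or, not_le,
      Pi.neg_apply, Finset.sum_neg_distrib] at hcon
    have hlt : ∑ j : Fin d, ∑ k : Fin d, (∑ i, f j k (x i)) ^ 2
        < ∑ j : Fin d, ∑ k : Fin d, (ε / d) ^ 2 := by
      have hne : (Finset.univ : Finset (Fin d)).Nonempty := ⟨⟨0, by omega⟩, Finset.mem_univ _⟩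
      refine Finset.sum_lt_sum_of_nonempty hne fun j _ => ?_
      refine Finset.sum_lt_sum_of_nonempty hne fun k _ => ?_
      have := hcon (j, k)
      exact sq_lt_sq' (by linarith [this.2]) this.1
    have hc : ∑ j : Fin d, ∑ k : Fin d, (ε / d) ^ 2 = ε ^ 2 := by
      simp
      field_simp
    have hx' : ε ≤ frobNormFrameOpSubId x := hx
    simp only [frobNormFrameOpSubId, ← hsum] at hx'
    have := (Real.le_sqrt hε (Finset.sum_nonneg fun j _ => Finset.sum_nonneg fun k _ =>
      sq_nonneg _)).1 hx'
    linarith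
  refine (measure_mono hincl).trans ?_
  refine (measure_iUnion_le _).trans ?_
  rw [tsum_fintype]
  calc _ ≤ ∑ p : Fin d × Fin d, ENNReal.ofReal (2 * E) := by
        refine Finset.sum_le_sum fun p _ => (measure_union_le _ _).trans ?_
        rw [two_mul, ENNReal.ofReal_add (exp_pos _).le (exp_pos _).le]
        exact add_le_add (hpos _ _) (hneg _ _)
    _ = ENNReal.ofReal (2 * d ^ 2 * E) := by
        rw [← ENNReal.ofReal_sum_of_nonneg (fun _ _ => by positivity)]
        congr 1
        simp
        ring
end
end

section
/- Let d ≥ 2 and n be positive integers, let (x_i)_{i=1}^n be independent random vectors each drawn from the uniform probability measure on the closed Euclidean ball of radius sqrt((d+2)/n) in ℝ^d, and let S = Σ_{i=1}^n x_i x_i^* be the associated frame operator. Then for every ε ≥ 0, the probability that ‖S − I_d‖_op ≥ ε is at most 2d · exp( − n ε² / (2d + 2 + 2ε(d+1)/3) ). -/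
open MeasureTheory ProbabilityTheory Real

noncomputable section

open Matrix in
lemma trace_cs {m : Type*} [Fintype m] (X Y : Matrix m m ℝ) :
    (X * Y).trace ≤ √((X * Xᵀ).trace * (Y * Yᵀ).trace) := by
  apply Real.le_sqrt_of_sq_le
  have h := Finset.sum_mul_sq_le_sq_mul_sq (Finset.univ : Finset (m × m))
    (fun p => X p.1 p.2) (fun p => Y p.2 p.1)
  simp only [Fintype.sum_prod_type] at h
  have e3 : ∑ x, ∑ x_1, (Y x_1 x) ^ 2 = (Y * Yᵀ).trace := by
    rw [Finset.sum_comm]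
    simp [Matrix.trace, Matrix.mul_apply, pow_two]
  rw [e3] at h
  simpa [Matrix.trace, Matrix.mul_apply, pow_two] using h

lemma trace_mul_pow_comm {m : Type*} [Fintype m] [DecidableEq m] (X Y : Matrix m m ℝ) (k : ℕ) :
    ((X * Y) ^ k).trace = ((Y * X) ^ k).trace := by
  cases k with
  | zero => simp
  | succ k =>
    have : ∀ k, Y * (X * Y) ^ k = (Y * X) ^ k * Y := by
      intro k
      induction k with
      | zero => simp
      | succ k ih => rw [pow_succ, pow_succ, ← mul_assoc, ih]; simp only [mul_assoc]
    rw [pow_succ', mul_assoc, Matrix.trace_mul_comm, this, mul_assoc, ← pow_succ]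

open Matrix in
lemma trace_ST {m : Type*} [Fintype m] [DecidableEq m] (k : ℕ) :
    (∀ X : Matrix m m ℝ, (X ^ (2 * 2 ^ k)).trace ≤ ((X * Xᵀ) ^ (2 ^ k)).trace) ∧
    (∀ P Q : Matrix m m ℝ, Pᵀ = P → Qᵀ = Q →
      ((P * Q) ^ (2 ^ k)).trace ≤ √((P ^ (2 * 2 ^ k)).trace * (Q ^ (2 * 2 ^ k)).trace)) := by
  have nn : ∀ X : Matrix m m ℝ, 0 ≤ (X * Xᵀ).trace := by
    intro X
    simp only [Matrix.trace, Matrix.mul_apply, Matrix.diag, Matrix.transpose_apply]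
    exact Finset.sum_nonneg fun i _ => Finset.sum_nonneg fun j _ => mul_self_nonneg _
  induction k with
  | zero =>
    constructor
    · intro X
      have := trace_cs X X
      rw [Real.sqrt_mul_self (nn X)] at this
      simpa [pow_two] using this
    · intro P Q hP hQ
      have := trace_cs P Q
      rw [hP, hQ] at this
      simpa [pow_two] using this
  | succ k ih =>
    obtain ⟨S, T⟩ := ih
    constructor
    · intro X
      have h1 := S (X ^ 2)
      have h2 : ((X ^ 2 * (X ^ 2)ᵀ) ^ (2 ^ k)).trace
          = (((Xᵀ * X) * (X * Xᵀ)) ^ (2 ^ k)).trace := by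
        have : X ^ 2 * (X ^ 2)ᵀ = X * (X * Xᵀ * Xᵀ) := by
          simp [pow_two, mul_assoc]
        rw [this, trace_mul_pow_comm, mul_assoc, trace_mul_pow_comm]
      have h3 := T (Xᵀ * X) (X * Xᵀ) (by simp) (by simp)
      have h4 : ((Xᵀ * X) ^ (2 * 2 ^ k)).trace = ((X * Xᵀ) ^ (2 * 2 ^ k)).trace :=
        trace_mul_pow_comm _ _ _
      have h5 : 0 ≤ ((X * Xᵀ) ^ (2 * 2 ^ k)).trace := by
        have := nn ((X * Xᵀ) ^ (2 ^ k))
        rw [Matrix.transpose_pow] at this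
        simpa [two_mul, pow_add] using this
      rw [h4, Real.sqrt_mul_self h5, ← h2] at h3
      have h6 := h1.trans h3
      rw [← pow_mul] at h6
      rw [pow_succ' 2 k]
      exact h6
    · intro P Q hP hQ
      have h1 := S (P * Q)
      have h2 : ((P * Q * (P * Q)ᵀ) ^ (2 ^ k)).trace = ((P ^ 2 * Q ^ 2) ^ (2 ^ k)).trace := by
        have : P * Q * (P * Q)ᵀ = P * (Q ^ 2 * P) := by
          simp [pow_two, mul_assoc, hP, hQ]
        rw [this, trace_mul_pow_comm, mul_assoc, ← pow_two, trace_mul_pow_comm]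
      have h3 := T (P ^ 2) (Q ^ 2) (by simp [Matrix.transpose_pow, hP])
        (by simp [Matrix.transpose_pow, hQ])
      rw [← h2] at h3
      have h6 := h1.trans h3
      rw [← pow_mul, ← pow_mul] at h6
      rw [pow_succ' 2 k]
      exact h6

open Matrix in
lemma trace_pow_le {m : Type*} [Fintype m] [DecidableEq m] (k : ℕ) :
    ∀ P Q : Matrix m m ℝ, Pᵀ = P → Qᵀ = Q →
      ((P * Q) ^ (2 ^ k)).trace ≤ (P ^ (2 ^ k) * Q ^ (2 ^ k)).trace := by
  induction k with
  | zero => intro P Q _ _; simp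
  | succ k ih =>
    intro P Q hP hQ
    have h1 := (trace_ST k).1 (P * Q)
    have h2 : ((P * Q * (P * Q)ᵀ) ^ (2 ^ k)).trace = ((P ^ 2 * Q ^ 2) ^ (2 ^ k)).trace := by
      have : P * Q * (P * Q)ᵀ = P * (Q ^ 2 * P) := by
        simp [pow_two, mul_assoc, hP, hQ]
      rw [this, trace_mul_pow_comm, mul_assoc, ← pow_two, trace_mul_pow_comm]
    have h3 := ih (P ^ 2) (Q ^ 2) (by simp [Matrix.transpose_pow, hP])
        (by simp [Matrix.transpose_pow, hQ])
    rw [h2] at h1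
    rw [← pow_mul, ← pow_mul] at h3
    rw [pow_succ' 2 k]
    exact h1.trans h3

lemma norm_pow_sub_pow_le' {𝔸 : Type*} [NormedRing 𝔸] [NormOneClass 𝔸] (X Y : 𝔸) (M : ℝ)
    (hX : ‖X‖ ≤ M) (hY : ‖Y‖ ≤ M) (hM : 1 ≤ M) (N : ℕ) :
    ‖X ^ N - Y ^ N‖ ≤ N * M ^ N * ‖X - Y‖ := by
  induction N with
  | zero => simp
  | succ k ih =>
    have e : X ^ (k+1) - Y ^ (k+1) = X ^ k * (X - Y) + (X ^ k - Y ^ k) * Y := by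
      rw [pow_succ, pow_succ]; noncomm_ring
    have hM0 : 0 ≤ M := by linarith
    rw [e]
    calc _ ≤ ‖X ^ k * (X - Y)‖ + ‖(X ^ k - Y ^ k) * Y‖ := norm_add_le _ _
      _ ≤ M ^ k * ‖X - Y‖ + (k * M ^ k * ‖X - Y‖) * M := by
        gcongr
        · refine (norm_mul_le _ _).trans ?_
          gcongr
          exact (norm_pow_le X k).trans (by gcongr)
        · exact (norm_mul_le _ _).trans (by gcongr)
      _ ≤ M ^ (k+1) * ‖X - Y‖ + (k * M ^ k * ‖X - Y‖) * M := by
        gcongr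
        omega
      _ = _ := by push_cast; ring

open Filter Topology in
lemma lie_trotter {𝔸 : Type*} [NormedRing 𝔸] [NormOneClass 𝔸] [NormedAlgebra ℝ 𝔸] [CompleteSpace 𝔸]
    (a b : 𝔸) :
    Tendsto (fun N : ℕ => (NormedSpace.exp ((N : ℝ)⁻¹ • a) * NormedSpace.exp ((N : ℝ)⁻¹ • b)) ^ N)
      atTop (𝓝 (NormedSpace.exp (a + b))) := by
  have hda := hasDerivAt_exp_smul_const (𝕂 := ℝ) a 0
  have hdb := hasDerivAt_exp_smul_const (𝕂 := ℝ) b 0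
  have hdc := hasDerivAt_exp_smul_const (𝕂 := ℝ) (a + b) 0
  have hG := hda.mul hdb
  have hF := hG.sub hdc
  simp only [zero_smul, NormedSpace.exp_zero, one_mul, mul_one, sub_self] at hF hG hdc
  have hu : Tendsto (fun N : ℕ => ((N : ℝ)⁻¹)) atTop (𝓝 0) := tendsto_inv_atTop_nhds_zero_nat
  obtain ⟨K, hK0, hK⟩ := hG.differentiableAt.hasFDerivAt.isBigO_sub.exists_pos
  obtain ⟨K', hK0', hK'⟩ := hdc.differentiableAt.hasFDerivAt.isBigO_sub.exists_pos
  have hK1 := hu.eventually hK.bound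
  have hK1' := hu.eventually hK'.bound
  have hlit := hasDerivAt_iff_isLittleO.1 hF
  have hlit2 := hlit.comp_tendsto hu
  simp only [Function.comp_def, Pi.mul_apply, Pi.sub_apply, zero_smul, NormedSpace.exp_zero, mul_one, sub_self, sub_zero, smul_zero] at hlit2 hK1 hK1'
  set L := max K K'
  have key : ∀ᶠ N : ℕ in atTop,
    ‖(NormedSpace.exp ((N : ℝ)⁻¹ • a) * NormedSpace.exp ((N : ℝ)⁻¹ • b)) ^ N
      - NormedSpace.exp (a + b)‖ ≤ Real.exp L * (N * ‖NormedSpace.exp ((N : ℝ)⁻¹ • a) * NormedSpace.exp ((N : ℝ)⁻¹ • b) -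
        NormedSpace.exp ((N : ℝ)⁻¹ • (a + b))‖) := by
    filter_upwards [hK1, hK1', eventually_gt_atTop 0] with N h1 h2 hN
    have hN' : (0:ℝ) < N := by exact_mod_cast hN
    have hL : 0 < L := lt_max_of_lt_left hK0
    have e : NormedSpace.exp (a + b) = NormedSpace.exp ((N : ℝ)⁻¹ • (a + b)) ^ N := by
      let : NormedAlgebra ℚ 𝔸 := NormedAlgebra.restrictScalars ℚ ℝ 𝔸
      rw [← NormedSpace.exp_nsmul, ← Nat.cast_smul_eq_nsmul ℝ, smul_smul,
        mul_inv_cancel₀ hN'.ne', one_smul]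
    rw [e]
    have b0 : ∀ Z : 𝔸, ‖Z - 1‖ ≤ L * (N:ℝ)⁻¹ → ‖Z‖ ≤ 1 + L * (N:ℝ)⁻¹ := by
      intro Z hZ
      calc ‖Z‖ = ‖1 + (Z - 1)‖ := by congr 1; abel
        _ ≤ ‖(1:𝔸)‖ + ‖Z - 1‖ := norm_add_le _ _
        _ ≤ _ := by rw [norm_one]; gcongr
    have nn : ‖(N:ℝ)⁻¹‖ = (N:ℝ)⁻¹ := by simp
    have b1 := b0 _ (h1.trans (by rw [nn]; gcongr; exact le_max_left _ _))
    have b2 := b0 _ (h2.trans (by rw [nn]; gcongr; exact le_max_right _ _))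
    refine (norm_pow_sub_pow_le' _ _ _ b1 b2 (by have : 0 ≤ L * (N:ℝ)⁻¹ := by positivity
                                                 linarith) N).trans ?_
    have : (1 + L * (N:ℝ)⁻¹) ^ N ≤ Real.exp L := by
      calc _ ≤ (Real.exp (L * (N:ℝ)⁻¹)) ^ N := by
            gcongr; rw [add_comm]; exact Real.add_one_le_exp _
        _ = Real.exp L := by
            rw [← Real.exp_nat_mul]; congr 1; field_simp
    calc _ ≤ N * Real.exp L * _ := by gcongr
      _ = _ := by ring
  rw [tendsto_iff_norm_sub_tendsto_zero]
  refine squeeze_zero' (Eventually.of_forall fun _ => norm_nonneg _) key ?_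
  rw [← mul_zero (Real.exp L)]
  refine Tendsto.const_mul _ ?_
  have := hlit2.norm_norm.tendsto_div_nhds_zero
  refine this.congr fun N => ?_
  simp only [norm_inv, RCLike.norm_natCast, div_inv_eq_mul]
  rw [mul_comm]

open Matrix Filter Topology in
lemma golden_thompson {m : Type*} [Fintype m] [DecidableEq m] [Nonempty m] (A B : Matrix m m ℝ)
    (hA : Aᵀ = A) (hB : Bᵀ = B) :
    (NormedSpace.exp (A + B)).trace ≤ (NormedSpace.exp A * NormedSpace.exp B).trace := by
  have hlim : Tendsto (fun N : ℕ => (NormedSpace.exp ((N : ℝ)⁻¹ • A) *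
      NormedSpace.exp ((N : ℝ)⁻¹ • B)) ^ N) atTop (𝓝 (NormedSpace.exp (A + B))) := by
    let : NormedRing (Matrix m m ℝ) := Matrix.linftyOpNormedRing
    let : NormedAlgebra ℝ (Matrix m m ℝ) := Matrix.linftyOpNormedAlgebra
    have : NormOneClass (Matrix m m ℝ) := Matrix.linfty_opNormOneClass
    exact lie_trotter A B
  have h2 : Tendsto (fun k : ℕ => 2 ^ k) atTop atTop := tendsto_pow_atTop_atTop_of_one_lt (by norm_num)
  have h3 := (((continuous_id.matrix_trace).tendsto _).comp hlim).comp h2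
  refine le_of_tendsto' h3 fun k => ?_
  simp only [Function.comp_def, id]
  refine (trace_pow_le k _ _ ?_ ?_).trans (le_of_eq ?_)
  · rw [← Matrix.exp_transpose, transpose_smul, hA]
  · rw [← Matrix.exp_transpose, transpose_smul, hB]
  · have h : ∀ C : Matrix m m ℝ,
      NormedSpace.exp (((2 ^ k : ℕ) : ℝ)⁻¹ • C) ^ (2 ^ k) = NormedSpace.exp C := by
      intro C
      rw [← Matrix.exp_nsmul, ← Nat.cast_smul_eq_nsmul ℝ, smul_smul, mul_inv_cancel₀, one_smul]
      positivity
    rw [h, h]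

lemma exp_le_pos_aux {y : ℝ} (hy : 0 ≤ y) :
    (1 - y / 3) * (Real.exp y - 1 - y) ≤ y ^ 2 / 2 := by
  have h1 : ∀ t : ℝ, 0 ≤ t → 0 ≤ t + (1/3) * (Real.exp t - 1 - t) - (1 - t/3) * (Real.exp t - 1) := by
    intro t ht
    have hmono : MonotoneOn (fun t : ℝ => t + (1/3) * (Real.exp t - 1 - t) - (1 - t/3) * (Real.exp t - 1)) (Set.Ici 0) := by
      refine monotoneOn_of_deriv_nonneg (convex_Ici 0) (by fun_prop) (by fun_prop) ?_
      intro x hx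
      have hd : HasDerivAt (fun t : ℝ => t + (1/3) * (Real.exp t - 1 - t) - (1 - t/3) * (Real.exp t - 1))
         (1 + (1/3) * (Real.exp x - 1) - ((-(1/3)) * (Real.exp x - 1) + (1 - x/3) * Real.exp x)) x := by
        have he := Real.hasDerivAt_exp x
        have hi := hasDerivAt_id x
        exact (hi.add (((he.sub_const 1).sub hi).const_mul (1/3))).sub
          ((((hi.div_const 3).const_sub 1).mul (he.sub_const 1)).congr_deriv (by simp))
      rw [hd.deriv]
      have : (1 - x) * Real.exp x ≤ 1 := by
        have := Real.add_one_le_exp (-x)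
        rw [Real.exp_neg] at this
        have hp := Real.exp_pos x
        calc (1 - x) * Real.exp x ≤ (Real.exp x)⁻¹ * Real.exp x := by gcongr; linarith
          _ = 1 := by field_simp
      nlinarith
    have := hmono (Set.mem_Ici.2 le_rfl) (Set.mem_Ici.2 ht) ht
    simpa using this
  have hmono : MonotoneOn (fun t : ℝ => t ^ 2 / 2 - (1 - t/3) * (Real.exp t - 1 - t)) (Set.Ici 0) := by
    refine monotoneOn_of_deriv_nonneg (convex_Ici 0) (by fun_prop) (by fun_prop) ?_
    intro x hx
    have hx0 : 0 ≤ x := by simp at hx; exact hx.le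
    have hd : HasDerivAt (fun t : ℝ => t ^ 2 / 2 - (1 - t/3) * (Real.exp t - 1 - t))
        (x + (1/3) * (Real.exp x - 1 - x) - (1 - x/3) * (Real.exp x - 1)) x := by
      have he := Real.hasDerivAt_exp x
      have hi := hasDerivAt_id x
      exact (((hi.pow 2).div_const 2).sub
          (((hi.div_const 3).const_sub 1).mul ((he.sub_const 1).sub hi))).congr_deriv (by simp; ring)
    rw [hd.deriv]
    exact h1 x hx0
  have := hmono (Set.mem_Ici.2 le_rfl) (Set.mem_Ici.2 hy) hy
  simp at this
  linarith

lemma exp_le_neg_aux {y : ℝ} (hy : y ≤ 0) : Real.exp y ≤ 1 + y + y ^ 2 / 2 := by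
  have h := Real.quadratic_le_exp_of_nonneg (x := -y) (by linarith)
  rw [Real.exp_neg] at h
  have hp := Real.exp_pos y
  have h2 : (1 + -y + (-y) ^ 2 / 2) * Real.exp y ≤ 1 := by
    calc _ ≤ (Real.exp y)⁻¹ * Real.exp y := by gcongr
      _ = 1 := by field_simp
  have h3 : 0 < 1 + -y + (-y) ^ 2 / 2 := by nlinarith
  have h4 : 1 ≤ (1 + -y + (-y) ^ 2 / 2) * (1 + y + y ^ 2 / 2) := by nlinarith [sq_nonneg (y^2)]
  exact le_of_mul_le_mul_left (h2.trans h4) h3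

lemma exp_bernstein {y b : ℝ} (hy : y ≤ b) (hb : 0 ≤ b) (hb3 : b < 3) :
    Real.exp y ≤ 1 + y + y ^ 2 / 2 / (1 - b / 3) := by
  have h1 : 0 < 1 - b / 3 := by linarith
  rcases le_total y 0 with h | h
  · refine (exp_le_neg_aux h).trans ?_
    have : y ^ 2 / 2 ≤ y ^ 2 / 2 / (1 - b / 3) := by
      rw [le_div_iff₀ h1]
      nlinarith [mul_nonneg (sq_nonneg y) hb]
    linarith
  · have := exp_le_pos_aux h
    have h2 : Real.exp y - 1 - y ≤ y ^ 2 / 2 / (1 - b / 3) := by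
      rw [le_div_iff₀ h1]
      refine le_trans ?_ this
      rw [mul_comm]
      have : 0 ≤ Real.exp y - 1 - y := by linarith [Real.add_one_le_exp y]
      gcongr
    linarith

lemma scalar_mgf (d n : ℝ) (hd : 0 < d) (hn : 0 < n) (θ : ℝ) (hθ : |θ| * ((d + 1) / n) < 3) :
    Real.exp (-θ / n) * (1 + (Real.exp (θ * ((d + 2) / n)) - 1) / ((d + 2) / n) * (1 / n)) ≤
      Real.exp ((d + 1) / n ^ 2 * (θ ^ 2 / 2 / (1 - |θ| * ((d + 1) / n) / 3))) := by
  set b := |θ| * ((d + 1) / n) with hb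
  have hb0 : 0 ≤ b := by positivity
  have e1 : Real.exp (-θ / n) * (1 + (Real.exp (θ * ((d + 2) / n)) - 1) / ((d + 2) / n) * (1 / n))
     = (d+1)/(d+2) * Real.exp (-θ/n) + 1/(d+2) * Real.exp (θ * ((d+1)/n)) := by
    have : Real.exp (θ * ((d+1)/n)) = Real.exp (-θ/n) * Real.exp (θ * ((d + 2) / n)) := by
      rw [← Real.exp_add]; congr 1; field_simp; ring
    rw [this]; field_simp; ring
  rw [e1]
  have b1 : -θ / n ≤ b := by
    calc -θ / n ≤ |θ| / n := by gcongr; exact neg_le_abs θ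
      _ = |θ| * (1 / n) := by ring
      _ ≤ b := by rw [hb]; gcongr; linarith
  have b2 : θ * ((d+1)/n) ≤ b := by rw [hb]; gcongr; exact le_abs_self θ
  have x1 := exp_bernstein b1 hb0 hθ
  have x2 := exp_bernstein b2 hb0 hθ
  have h1 : 0 < 1 - b / 3 := by linarith
  calc _ ≤ (d+1)/(d+2) * (1 + -θ / n + (-θ / n) ^ 2 / 2 / (1 - b / 3)) +
      1/(d+2) * (1 + θ * ((d+1)/n) + (θ * ((d+1)/n)) ^ 2 / 2 / (1 - b / 3)) := by gcongr
    _ = (d + 1) / n ^ 2 * (θ ^ 2 / 2 / (1 - b / 3)) + 1 := by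
      generalize 1 - b / 3 = w at h1
      field_simp
      ring
    _ ≤ _ := Real.add_one_le_exp _

lemma final_exponent (d n ε : ℝ) (hd : 0 < d) (hn : 0 < n) (hε : 0 ≤ ε) :
    ∃ θ : ℝ, 0 ≤ θ ∧ θ * ((d + 1) / n) < 3 ∧
      -(θ * ε) + n * ((d + 1) / n ^ 2 * (θ ^ 2 / 2 / (1 - θ * ((d + 1) / n) / 3))) =
      -(n * ε ^ 2) / (2 * d + 2 + 2 * ε * (d + 1) / 3) := by
  refine ⟨3 * ε * n / ((d + 1) * (3 + ε)), by positivity, ?_, ?_⟩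
  · have : 3 * ε * n / ((d + 1) * (3 + ε)) * ((d + 1) / n) = 3 * ε / (3 + ε) := by field_simp
    rw [this, div_lt_iff₀ (by positivity)]; nlinarith
  · have : 1 - 3 * ε * n / ((d + 1) * (3 + ε)) * ((d + 1) / n) / 3 = 3 / (3 + ε) := by
      field_simp; ring
    rw [this]
    have : 2 * d + 2 + 2 * ε * (d + 1) / 3 = 2 * (d + 1) * (3 + ε) / 3 := by ring
    rw [this]
    field_simp
    ring

open Matrix in
lemma exp_rank_one {m : Type*} [Fintype m] [DecidableEq m] (B : Matrix m m ℝ) (s θ : ℝ)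
    (hs : s ≠ 0) (hB : B * B = s • B) :
    NormedSpace.exp (θ • B) = 1 + ((Real.exp (θ * s) - 1) / s) • B := by
  let _ : NormedRing (Matrix m m ℝ) := Matrix.linftyOpNormedRing
  let _ : NormedAlgebra ℝ (Matrix m m ℝ) := Matrix.linftyOpNormedAlgebra
  have h1 := NormedSpace.exp_series_hasSum_exp' (𝕂 := ℝ) (θ • B)
  have h2 := NormedSpace.exp_series_hasSum_exp' (𝕂 := ℝ) (θ * s)
  rw [← Real.exp_eq_exp_ℝ] at h2
  have h3 := (h2.smul_const (s⁻¹ • B)).add (hasSum_ite_eq (0:ℕ) (1 - s⁻¹ • B))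
  have hpow : ∀ k : ℕ, B ^ (k+1) = s ^ k • B := by
    intro k
    induction k with
    | zero => simp
    | succ k ih => rw [pow_succ, ih, smul_mul_assoc, hB, smul_smul, pow_succ]
  have h4 : (fun k : ℕ => ((k.factorial : ℝ)⁻¹) • (θ • B) ^ k) =
     fun k : ℕ => ((((k.factorial : ℝ)⁻¹) • (θ * s) ^ k) • (s⁻¹ • B) + if k = 0 then 1 - s⁻¹ • B else 0) := by
    funext k
    cases k with
    | zero => simp
    | succ k =>
      rw [smul_pow, hpow]
      simp only [smul_smul, Nat.add_eq_zero_iff, one_ne_zero, and_false, if_false, add_zero, smul_eq_mul]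
      congr 1
      rw [mul_pow, pow_succ s]
      field_simp
  rw [h4] at h1
  refine (h1.unique h3).trans ?_
  rw [div_eq_mul_inv, mul_smul, sub_smul, one_smul]
  abel

open Matrix in
lemma step_pt {m : Type*} [Fintype m] [DecidableEq m] [Nonempty m] (A : Matrix m m ℝ) (hA : Aᵀ = A)
    (v : m → ℝ) (θ Q : ℝ) (hQ : 0 < Q) (hv : v ⬝ᵥ v ≤ Q) :
    (NormedSpace.exp (A + θ • vecMulVec v v)).trace ≤ (NormedSpace.exp A).trace +
      (Real.exp (θ * Q) - 1) / Q * (NormedSpace.exp A * vecMulVec v v).trace := by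
  have hsym : (vecMulVec v v)ᵀ = vecMulVec v v := by simp [transpose_vecMulVec]
  refine (golden_thompson A _ hA (by rw [transpose_smul, hsym])).trans ?_
  by_cases hs : v ⬝ᵥ v = 0
  · have : v = 0 := dotProduct_self_eq_zero.1 hs
    simp [this]
  rw [exp_rank_one (vecMulVec v v) (v ⬝ᵥ v) θ hs (by rw [vecMulVec_mul_vecMulVec, vecMulVec_smul]), mul_add, mul_one,
    trace_add, mul_smul_comm, trace_smul, smul_eq_mul]
  have hs0 : 0 < v ⬝ᵥ v := lt_of_le_of_ne (by rw [dotProduct]; exact Finset.sum_nonneg fun i _ => mul_self_nonneg _) (Ne.symm hs)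
  set s := v ⬝ᵥ v
  have hpos : 0 ≤ (NormedSpace.exp A * vecMulVec v v).trace := by
    set E := NormedSpace.exp ((1/2 : ℝ) • A)
    have hE : NormedSpace.exp A = E * E := by
      rw [← Matrix.exp_add_of_commute _ _ (Commute.refl _), ← add_smul]; norm_num
    have hEt : Eᵀ = E := by rw [← Matrix.exp_transpose, transpose_smul, hA]
    have : (E * E * vecMulVec v v).trace = (E *ᵥ v) ⬝ᵥ (E *ᵥ v) := by
      rw [mul_assoc, trace_mul_comm, mul_vecMulVec, vecMulVec_mul, trace_vecMulVec, ← mulVec_transpose, hEt]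
    rw [hE, this, dotProduct]
    exact Finset.sum_nonneg fun i _ => mul_self_nonneg _
  refine add_le_add le_rfl (mul_le_mul_of_nonneg_right ?_ hpos)
  rw [div_le_div_iff₀ hs0 hQ]
  have hc := convexOn_exp.2 (Set.mem_univ 0) (Set.mem_univ (θ * Q))
    (show 0 ≤ 1 - s / Q by rw [sub_nonneg, div_le_one hQ]; exact hv) (show 0 ≤ s / Q by positivity)
    (by ring)
  simp only [smul_eq_mul, mul_zero, zero_add, Real.exp_zero, mul_one] at hc
  have e : s / Q * (θ * Q) = θ * s := by field_simp
  rw [e] at hc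
  have : (Real.exp (θ * s) - 1) ≤ s / Q * (Real.exp (θ * Q) - 1) := by linarith
  calc _ ≤ s / Q * (Real.exp (θ * Q) - 1) * Q := by gcongr
    _ = _ := by field_simp

lemma ball_int_isometry {d : ℕ} (R : ℝ) (e : EuclideanSpace ℝ (Fin d) ≃ₗᵢ[ℝ] EuclideanSpace ℝ (Fin d))
    (g : EuclideanSpace ℝ (Fin d) → ℝ) :
    ∫ x in Metric.closedBall 0 R, g (e x) = ∫ x in Metric.closedBall 0 R, g x := by
  have h := (LinearIsometryEquiv.measurePreserving e).setIntegral_preimage_emb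
    e.toHomeomorph.measurableEmbedding g (Metric.closedBall 0 R)
  rw [e.preimage_closedBall] at h
  simpa using h

lemma ball_int_off {d : ℕ} (R : ℝ) (i j : Fin d) (hij : i ≠ j) :
    ∫ x : EuclideanSpace ℝ (Fin d) in Metric.closedBall 0 R, x i * x j = 0 := by
  have h := ball_int_isometry R (LinearIsometryEquiv.piLpCongrRight (𝕜 := ℝ) 2
    (fun k : Fin d => if k = i then LinearIsometryEquiv.neg ℝ else LinearIsometryEquiv.refl ℝ ℝ))
    (fun x => x i * x j)
  simp [hij.symm] at h
  rw [integral_neg] at h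
  linarith

lemma ball_int_diag {d : ℕ} (R : ℝ) (i j : Fin d) :
    ∫ x : EuclideanSpace ℝ (Fin d) in Metric.closedBall 0 R, x i * x i =
    ∫ x : EuclideanSpace ℝ (Fin d) in Metric.closedBall 0 R, x j * x j := by
  have h := ball_int_isometry R (LinearIsometryEquiv.piLpCongrLeft 2 ℝ ℝ (Equiv.swap i j))
    (fun x => x i * x i)
  simp [Equiv.piCongrLeft'] at h
  exact h.symm

lemma ball_int_norm {d : ℕ} (hd : 2 ≤ d) (R : ℝ) (hR : 0 < R) :
    ∫ x : EuclideanSpace ℝ (Fin d) in Metric.closedBall 0 R, ‖x‖ ^ 2 =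
      d / (d + 2) * R ^ 2 * (volume : Measure (EuclideanSpace ℝ (Fin d))).real (Metric.closedBall 0 R) := by
  have : Nonempty (Fin d) := ⟨⟨0, by omega⟩⟩
  rw [← integral_indicator Metric.isClosed_closedBall.measurableSet]
  have e1 : (Metric.closedBall (0 : EuclideanSpace ℝ (Fin d)) R).indicator (fun x => ‖x‖ ^ 2)
    = fun x => (Set.Iic R).indicator (fun y : ℝ => y ^ 2) ‖x‖ := by
    funext x
    simp [Set.indicator]
  rw [e1, integral_fun_norm_addHaar volume ((Set.Iic R).indicator (fun y : ℝ => y ^ 2))]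
  have e2 : ∫ (y : ℝ) in Set.Ioi 0, y ^ (Module.finrank ℝ (EuclideanSpace ℝ (Fin d)) - 1) •
      (Set.Iic R).indicator (fun y : ℝ => y ^ 2) y = R ^ (d + 2) / (d + 2) := by
    have : ∀ y : ℝ, y ^ (Module.finrank ℝ (EuclideanSpace ℝ (Fin d)) - 1) •
      (Set.Iic R).indicator (fun y : ℝ => y ^ 2) y = (Set.Iic R).indicator (fun y : ℝ => y ^ (d+1)) y := by
      intro y
      simp only [finrank_euclideanSpace, Fintype.card_fin, smul_eq_mul, Set.indicator]
      split_ifs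
      · rw [← pow_add]; congr 1; omega
      · simp
    simp_rw [this]
    rw [setIntegral_indicator measurableSet_Iic, Set.Ioi_inter_Iic,
      ← intervalIntegral.integral_of_le hR.le, integral_pow]
    simp; ring
  rw [e2]
  have e3 : (volume : Measure (EuclideanSpace ℝ (Fin d))).real (Metric.closedBall 0 R) =
      R ^ d * (volume : Measure (EuclideanSpace ℝ (Fin d))).real (Metric.ball 0 1) := by
    rw [Measure.real, Measure.addHaar_closedBall _ _ hR.le, ENNReal.toReal_mul,
      ENNReal.toReal_ofReal (by positivity), finrank_euclideanSpace, Fintype.card_fin]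
    rfl
  rw [e3]
  simp only [finrank_euclideanSpace, Fintype.card_fin, smul_eq_mul, nsmul_eq_mul]
  field_simp
  ring

lemma ball_integrable {d : ℕ} (R : ℝ) (g : EuclideanSpace ℝ (Fin d) → ℝ) (hg : Continuous g) :
    IntegrableOn g (Metric.closedBall 0 R) :=
  hg.continuousOn.integrableOn_compact (isCompact_closedBall 0 R)

lemma cond_integrable {d : ℕ} (R : ℝ) (hR : 0 < R) (g : EuclideanSpace ℝ (Fin d) → ℝ) (hg : Continuous g) :
    Integrable g (volume : Measure (EuclideanSpace ℝ (Fin d)))[|Metric.closedBall 0 R] := by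
  refine Integrable.smul_measure (ball_integrable R g hg) ?_
  exact ENNReal.inv_ne_top.2 (Metric.measure_closedBall_pos volume _ hR).ne'

lemma ball_moment {d : ℕ} (hd : 2 ≤ d) (R : ℝ) (hR : 0 < R) (i j : Fin d) :
    ∫ x, x i * x j ∂((volume : Measure (EuclideanSpace ℝ (Fin d)))[|Metric.closedBall 0 R]) =
      if i = j then R ^ 2 / (d + 2) else 0 := by
  rw [ProbabilityTheory.cond, integral_smul_measure]
  split_ifs with h
  · subst h
    have h1 := ball_int_norm hd R hR
    have h2 : ∫ x : EuclideanSpace ℝ (Fin d) in Metric.closedBall 0 R, ‖x‖ ^ 2 =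
        d * ∫ x : EuclideanSpace ℝ (Fin d) in Metric.closedBall 0 R, x i * x i := by
      simp_rw [EuclideanSpace.real_norm_sq_eq, pow_two]
      rw [integral_finsetSum _ (fun k _ => ball_integrable R _ (by fun_prop)),
        Finset.sum_congr rfl (fun k _ => ball_int_diag R k i)]
      simp
    rw [h2] at h1
    have hv : 0 < (volume : Measure (EuclideanSpace ℝ (Fin d))).real (Metric.closedBall 0 R) :=
      ENNReal.toReal_pos (Metric.measure_closedBall_pos volume _ hR).ne' measure_closedBall_lt_top.ne
    rw [ENNReal.toReal_inv, smul_eq_mul]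
    change (Measure.real _ _)⁻¹ * _ = _
    have hd0 : (0:ℝ) < d := by exact_mod_cast (by omega : 0 < d)
    set V := (volume : Measure (EuclideanSpace ℝ (Fin d))).real (Metric.closedBall 0 R)
    have h3 : ∫ x : EuclideanSpace ℝ (Fin d) in Metric.closedBall 0 R, x i * x i
       = R ^ 2 / (d + 2) * V := by
      apply mul_left_cancel₀ hd0.ne'
      rw [h1]; ring
    rw [h3]; field_simp
  · rw [ball_int_off R i j h, smul_zero]

lemma continuous_matrix_exp {m : Type*} [Fintype m] [DecidableEq m] :
    Continuous (NormedSpace.exp : Matrix m m ℝ → Matrix m m ℝ) := by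
  let _ : NormedRing (Matrix m m ℝ) := Matrix.linftyOpNormedRing
  let _ : NormedAlgebra ℝ (Matrix m m ℝ) := Matrix.linftyOpNormedAlgebra
  let _ : NormedAlgebra ℚ (Matrix m m ℝ) := NormedAlgebra.restrictScalars ℚ ℝ _
  exact NormedSpace.exp_continuous

lemma continuous_trace_exp {d m : ℕ} (A : Matrix (Fin d) (Fin d) ℝ) (θ : ℝ) :
    Continuous fun x : Fin m → EuclideanSpace ℝ (Fin d) =>
      (NormedSpace.exp (A + θ • ∑ i, Matrix.vecMulVec (x i) (x i))).trace := by
  refine (continuous_matrix_exp.comp ?_).matrix_trace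
  refine continuous_const.add (Continuous.const_smul (continuous_finsetSum _ fun i _ => ?_) θ)
  refine Continuous.matrix_vecMulVec ?_ ?_ <;>
  · apply continuous_pi; intro j; fun_prop

open Matrix in
lemma step_lint {d : ℕ} (hd : 2 ≤ d) (R : ℝ) (hR : 0 < R) (A : Matrix (Fin d) (Fin d) ℝ) (hA : Aᵀ = A)
    (θ : ℝ) :
    ∫⁻ x, ENNReal.ofReal (NormedSpace.exp (A + θ • vecMulVec x x)).trace
      ∂((volume : Measure (EuclideanSpace ℝ (Fin d)))[|Metric.closedBall 0 R]) ≤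
    ENNReal.ofReal ((1 + (Real.exp (θ * R ^ 2) - 1) / R ^ 2 * (R ^ 2 / (d + 2))) *
      (NormedSpace.exp A).trace) := by
  have : Nonempty (Fin d) := ⟨⟨0, by omega⟩⟩
  have hpos : ∀ B : Matrix (Fin d) (Fin d) ℝ, Bᵀ = B → 0 ≤ (NormedSpace.exp B).trace := by
    intro B hB
    set E := NormedSpace.exp ((1/2 : ℝ) • B)
    have hE : NormedSpace.exp B = E * Eᵀ := by
      rw [← Matrix.exp_transpose, transpose_smul, hB,
        ← Matrix.exp_add_of_commute _ _ (Commute.refl _), ← add_smul]; norm_num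
    rw [hE]
    simp only [Matrix.trace, Matrix.mul_apply, Matrix.diag, Matrix.transpose_apply]
    exact Finset.sum_nonneg fun i _ => Finset.sum_nonneg fun j _ => mul_self_nonneg _
  set μ := (volume : Measure (EuclideanSpace ℝ (Fin d)))[|Metric.closedBall 0 R] with hμ
  have hprob : IsProbabilityMeasure μ := by
    refine cond_isProbabilityMeasure_of_finite ?_ ?_
    · exact (Metric.measure_closedBall_pos volume _ hR).ne'
    · exact measure_closedBall_lt_top.ne
  set κ := (Real.exp (θ * R ^ 2) - 1) / R ^ 2
  set W := NormedSpace.exp A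
  let g : EuclideanSpace ℝ (Fin d) → ℝ := fun x => W.trace + κ * ∑ i, ∑ j, W i j * (x j * x i)
  have hg : Continuous g := by fun_prop
  have hgi : Integrable g μ := cond_integrable R hR g hg
  have hae : ∀ᵐ x ∂μ, (NormedSpace.exp (A + θ • vecMulVec x x)).trace ≤ g x := by
    have hmem : ∀ᵐ x ∂μ, x ∈ Metric.closedBall (0 : EuclideanSpace ℝ (Fin d)) R :=
      ae_cond_mem Metric.isClosed_closedBall.measurableSet
    filter_upwards [hmem] with x hx
    have hx' : (x : Fin d → ℝ) ⬝ᵥ x ≤ R ^ 2 := by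
      have : ‖x‖ ≤ R := by simpa using hx
      calc (x : Fin d → ℝ) ⬝ᵥ x = ‖x‖ ^ 2 := by
            rw [EuclideanSpace.real_norm_sq_eq]; simp [dotProduct, pow_two]
        _ ≤ R ^ 2 := by gcongr
    refine (step_pt A hA x θ (R ^ 2) (by positivity) hx').trans (le_of_eq ?_)
    simp [g, Matrix.trace, Matrix.mul_apply, vecMulVec_apply, W, κ]
  have hgval : ∫ x, g x ∂μ = (1 + κ * (R ^ 2 / (d + 2))) * W.trace := by
    have hi : ∀ i j, Integrable (fun x : EuclideanSpace ℝ (Fin d) => W i j * (x j * x i)) μ :=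
      fun i j => cond_integrable R hR _ (by fun_prop)
    simp only [g]
    rw [integral_add (integrable_const _) (cond_integrable R hR _ (by fun_prop)),
      integral_const_mul, integral_finsetSum _ (fun i _ => integrable_finsetSum _ fun j _ => hi i j)]
    simp_rw [integral_finsetSum _ (fun j _ => hi _ j), integral_const_mul, hμ, ball_moment hd R hR]
    simp [Matrix.trace, ← Finset.sum_mul]
    ring
  calc _ ≤ ∫⁻ x, ENNReal.ofReal (g x) ∂μ := lintegral_mono_ae (by
            filter_upwards [hae] with x hx using ENNReal.ofReal_le_ofReal hx)
    _ = ENNReal.ofReal (∫ x, g x ∂μ) := by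
      rw [ofReal_integral_eq_lintegral_ofReal hgi]
      filter_upwards [hae] with x hx
      refine le_trans (hpos _ ?_) hx
      rw [transpose_add, hA, transpose_smul, transpose_vecMulVec]
    _ = _ := by rw [hgval]

open Matrix in
lemma all_lint {d : ℕ} (hd : 2 ≤ d) (R : ℝ) (hR : 0 < R) (θ : ℝ)
    (hc : 0 ≤ 1 + (Real.exp (θ * R ^ 2) - 1) / R ^ 2 * (R ^ 2 / (d + 2))) (m : ℕ) :
    ∀ (A : Matrix (Fin d) (Fin d) ℝ), Aᵀ = A →
    ∫⁻ x, ENNReal.ofReal (NormedSpace.exp (A + θ • ∑ i, vecMulVec (x i) (x i))).trace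
      ∂(Measure.pi fun _ : Fin m => (volume : Measure (EuclideanSpace ℝ (Fin d)))[|Metric.closedBall 0 R]) ≤
    ENNReal.ofReal ((1 + (Real.exp (θ * R ^ 2) - 1) / R ^ 2 * (R ^ 2 / (d + 2))) ^ m *
      (NormedSpace.exp A).trace) := by
  have hprob : IsProbabilityMeasure (volume : Measure (EuclideanSpace ℝ (Fin d)))[|Metric.closedBall 0 R] := by
    refine cond_isProbabilityMeasure_of_finite ?_ ?_
    · exact (Metric.measure_closedBall_pos volume _ hR).ne'
    · exact measure_closedBall_lt_top.ne
  induction m with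
  | zero => intro A hA; simp
  | succ m ih =>
    intro A hA
    set c := 1 + (Real.exp (θ * R ^ 2) - 1) / R ^ 2 * (R ^ 2 / (d + 2)) with hcdef
    set μ := (volume : Measure (EuclideanSpace ℝ (Fin d)))[|Metric.closedBall 0 R] with hμ
    have hmp := (measurePreserving_piFinSuccAbove (fun _ : Fin (m+1) => μ) 0).symm
    rw [← hmp.lintegral_comp_emb (MeasurableEquiv.measurableEmbedding _)]
    have hmeas : Measurable (fun x : Fin (m+1) → EuclideanSpace ℝ (Fin d) => ENNReal.ofReal
      (NormedSpace.exp (A + θ • ∑ i, vecMulVec (x i) (x i))).trace) :=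
      (continuous_trace_exp A θ).measurable.ennreal_ofReal
    have hmeas2 := hmeas.comp (MeasurableEquiv.piFinSuccAbove (fun _ : Fin (m+1) => EuclideanSpace ℝ (Fin d)) 0).symm.measurable
    simp only [Function.comp_def] at hmeas2
    rw [lintegral_prod _ hmeas2.aemeasurable]
    simp only [MeasurableEquiv.piFinSuccAbove_symm_apply, Fin.insertNthEquiv, Equiv.coe_fn_mk,
      Fin.insertNth_zero', Fin.sum_univ_succ, Fin.cons_zero, Fin.cons_succ, smul_add, ← add_assoc]
    calc _ ≤ ∫⁻ x, ENNReal.ofReal (c ^ m * (NormedSpace.exp (A + θ • vecMulVec x x)).trace) ∂μ := by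
          apply lintegral_mono
          intro x
          refine ih _ ?_
          rw [transpose_add, hA, transpose_smul, transpose_vecMulVec]
      _ = ENNReal.ofReal (c ^ m) * ∫⁻ x, ENNReal.ofReal (NormedSpace.exp (A + θ • vecMulVec x x)).trace ∂μ := by
          simp_rw [ENNReal.ofReal_mul (pow_nonneg hc m)]
          rw [lintegral_const_mul' _ _ ENNReal.ofReal_ne_top]
      _ ≤ ENNReal.ofReal (c ^ m) * ENNReal.ofReal (c * (NormedSpace.exp A).trace) := by
          gcongr
          exact step_lint hd R hR A hA θ
      _ = _ := by
          rw [← ENNReal.ofReal_mul (pow_nonneg hc m)]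
          congr 1; ring

lemma frameOperator_eq {d n : ℕ} (x : Fin n → EuclideanSpace ℝ (Fin d)) :
    frameOperator x - 1 = Matrix.toEuclideanCLM (𝕜 := ℝ) (n := Fin d)
      (∑ i, Matrix.vecMulVec (x i) (x i) - 1) := by
  rw [map_sub, map_one, map_sum, frameOperator]
  congr 1
  refine Finset.sum_congr rfl fun i _ => ?_
  ext v j
  rw [Matrix.ofLp_toEuclideanCLM]
  simp [Matrix.vecMulVec_mulVec, PiLp.inner_apply, dotProduct, mul_comm]

open Matrix in
open scoped Matrix.Norms.L2Operator in
lemma opNorm_trace {d : ℕ} (M : Matrix (Fin d) (Fin d) ℝ) (hM : Mᵀ = M) (ε θ : ℝ) (hε : 0 < ε)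
    (hθ : 0 ≤ θ) (h : ε ≤ ‖Matrix.toEuclideanCLM (𝕜 := ℝ) (n := Fin d) M‖) :
    Real.exp (θ * ε) ≤ (NormedSpace.exp (θ • M)).trace ∨
    Real.exp (θ * ε) ≤ (NormedSpace.exp ((-θ) • M)).trace := by
  have hH : M.IsHermitian := by
    rw [Matrix.IsHermitian, conjTranspose_eq_transpose_of_trivial]; exact hM
  have hsp := hH.spectral_theorem
  rw [Unitary.conjStarAlgAut_apply] at hsp
  set U := hH.eigenvectorUnitary
  have htr : ∀ t : ℝ, (NormedSpace.exp (t • M)).trace = ∑ i, Real.exp (t * hH.eigenvalues i) := by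
    intro t
    have hinv : (U : Matrix (Fin d) (Fin d) ℝ)⁻¹ = star (U : Matrix (Fin d) (Fin d) ℝ) :=
      Matrix.inv_eq_left_inv (Unitary.coe_star_mul_self U)
    have hu : IsUnit (U : Matrix (Fin d) (Fin d) ℝ) := (Unitary.toUnits U).isUnit
    have e : t • M = (U : Matrix (Fin d) (Fin d) ℝ) * diagonal (t • hH.eigenvalues) * (U : Matrix (Fin d) (Fin d) ℝ)⁻¹ := by
      conv_lhs => rw [hsp]
      rw [hinv, diagonal_smul, mul_smul_comm, smul_mul_assoc]
      rfl
    rw [e, Matrix.exp_conj _ _ hu, Matrix.trace_mul_comm, ← mul_assoc, hinv, Unitary.coe_star_mul_self, one_mul,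
      Matrix.exp_diagonal, trace_diagonal]
    refine Finset.sum_congr rfl fun i _ => ?_
    rw [Pi.exp_def, ← Real.exp_eq_exp_ℝ]
    simp
  have hex : ∃ i, ε ≤ |hH.eigenvalues i| := by
    by_contra! hcon
    rw [Matrix.l2_opNorm_toEuclideanCLM, hsp, ← Unitary.coe_star, CStarRing.norm_mul_coe_unitary,
      CStarRing.norm_coe_unitary_mul, Matrix.l2_opNorm_diagonal] at h
    refine absurd h (not_le.2 ?_)
    rw [pi_norm_lt_iff hε]
    intro i
    simpa using hcon i
  obtain ⟨i, hi⟩ := hex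
  have hsingle : ∀ t : ℝ, Real.exp (t * hH.eigenvalues i) ≤ (NormedSpace.exp (t • M)).trace := by
    intro t
    rw [htr]
    exact Finset.single_le_sum (f := fun i => Real.exp (t * hH.eigenvalues i))
      (fun _ _ => (Real.exp_pos _).le) (Finset.mem_univ i)
  rcases le_abs'.1 hi with h1 | h1
  · right
    refine le_trans ?_ (hsingle _)
    apply Real.exp_le_exp.2
    nlinarith
  · left
    refine le_trans ?_ (hsingle _)
    gcongr

open Matrix in
lemma one_tail {d n : ℕ} (hd : 2 ≤ d) (hn : 0 < n) (θ r : ℝ) (hθ : |θ| * ((d + 1) / n) < 3) :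
    (Measure.pi fun _ : Fin n =>
        (volume : Measure (EuclideanSpace ℝ (Fin d)))[|
          Metric.closedBall (0 : EuclideanSpace ℝ (Fin d)) (Real.sqrt ((d + 2) / n))])
      {x | Real.exp r ≤ (NormedSpace.exp (θ • (∑ i, vecMulVec (x i) (x i) - 1))).trace} ≤
    ENNReal.ofReal (d * Real.exp (-r + n * ((d + 1) / n ^ 2 *
      (θ ^ 2 / 2 / (1 - |θ| * ((d + 1) / n) / 3))))) := by
  have hn' : (0:ℝ) < n := by exact_mod_cast hn
  have hd' : (0:ℝ) < d := by exact_mod_cast (by omega : 0 < d)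
  have hQ : (0:ℝ) < (d + 2) / n := by positivity
  set R := Real.sqrt ((d + 2) / n) with hR
  have hR0 : 0 < R := Real.sqrt_pos.2 hQ
  have hR2 : R ^ 2 = (d + 2) / n := Real.sq_sqrt hQ.le
  have hR3 : R ^ 2 / (d + 2) = 1 / n := by rw [hR2]; field_simp
  have hmgf := scalar_mgf d n hd' hn' θ hθ
  rw [← hR2] at hmgf
  have hc : 0 ≤ 1 + (Real.exp (θ * R ^ 2) - 1) / R ^ 2 * (1 / n) := by
    have : (1:ℝ) / R ^ 2 * (1 / n) = 1 / (d + 2) := by rw [hR2]; field_simp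
    have h2 : (Real.exp (θ * R ^ 2) - 1) / R ^ 2 * (1 / n) = (Real.exp (θ * R ^ 2) - 1) * (1 / (d + 2)) := by
      rw [← this]; ring
    rw [h2]
    have h3 : (1:ℝ) / (d + 2) ≤ 1 := by rw [div_le_one (by positivity)]; linarith
    have h4 : (0:ℝ) < 1 / (d + 2) := by positivity
    have := Real.exp_pos (θ * R ^ 2)
    nlinarith
  have hall := all_lint hd R hR0 θ (by rw [hR3]; exact hc) n ((-θ) • (1 : Matrix (Fin d) (Fin d) ℝ))
    (by simp)
  rw [hR3] at hall
  set c := 1 + (Real.exp (θ * R ^ 2) - 1) / R ^ 2 * (1 / n)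
  have htr : (NormedSpace.exp ((-θ) • (1 : Matrix (Fin d) (Fin d) ℝ))).trace = d * Real.exp (-θ) := by
    rw [smul_one_eq_diagonal, Matrix.exp_diagonal, trace_diagonal]
    simp_rw [Pi.exp_def, ← Real.exp_eq_exp_ℝ]
    simp
  rw [htr] at hall
  have hset : {x : Fin n → EuclideanSpace ℝ (Fin d) |
      Real.exp r ≤ (NormedSpace.exp (θ • (∑ i, vecMulVec (x i) (x i) - 1))).trace} ⊆
      {x | ENNReal.ofReal (Real.exp r) ≤ ENNReal.ofReal (NormedSpace.exp
        ((-θ) • (1 : Matrix (Fin d) (Fin d) ℝ) + θ • ∑ i, vecMulVec (x i) (x i))).trace} := by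
    intro x hx
    simp only [Set.mem_ofPred_eq] at hx ⊢
    apply ENNReal.ofReal_le_ofReal
    refine hx.trans (le_of_eq ?_)
    congr 2
    rw [smul_sub, neg_smul]; abel
  refine (measure_mono hset).trans ?_
  refine (meas_ge_le_lintegral_div (continuous_trace_exp _ θ).measurable.ennreal_ofReal.aemeasurable
    (by simp [Real.exp_pos]) ENNReal.ofReal_ne_top).trans ?_
  refine (ENNReal.div_le_div_right hall _).trans ?_
  rw [← ENNReal.ofReal_div_of_pos (Real.exp_pos r)]
  apply ENNReal.ofReal_le_ofReal
  have hpow : (Real.exp (-θ / n) * c) ^ n ≤ _ := pow_le_pow_left₀ (by positivity) hmgf n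
  rw [mul_pow, ← Real.exp_nat_mul, ← Real.exp_nat_mul, mul_div_cancel₀ _ hn'.ne'] at hpow
  rw [Real.exp_add, Real.exp_neg r, div_eq_mul_inv]
  calc c ^ n * (d * Real.exp (-θ)) * (Real.exp r)⁻¹
      = d * ((Real.exp r)⁻¹ * (Real.exp (-θ) * c ^ n)) := by ring
    _ ≤ _ := by gcongr

/-- **Concentration in the ball, operator norm.**
If `x₁, …, xₙ` are i.i.d. uniform on the closed Euclidean ball of radius `√((d+2)/n)` in
`ℝ^d` (the uniform measure being the normalized restriction of Lebesgue measure to the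
ball, i.e. `volume[|closedBall 0 R]`), then for every `ε ≥ 0`,
`ℙ(‖S - I‖_op ≥ ε) ≤ 2d · exp(-nε² / (2d + 2 + 2ε(d+1)/3))`. -/
theorem ball_concentration_opNorm
    (d n : ℕ) (hd : 2 ≤ d) (hn : 0 < n)
    (ε : ℝ) (hε : 0 ≤ ε) :
    (Measure.pi fun _ : Fin n =>
        (volume : Measure (EuclideanSpace ℝ (Fin d)))[|
          Metric.closedBall (0 : EuclideanSpace ℝ (Fin d))
            (Real.sqrt ((d + 2) / n))])
        {x | ε ≤ ‖frameOperator x - 1‖}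
      ≤ ENNReal.ofReal
          (2 * d * Real.exp (-(n * ε ^ 2) / (2 * d + 2 + 2 * ε * (d + 1) / 3))) := by
  have hn' : (0:ℝ) < n := by exact_mod_cast hn
  have hd' : (0:ℝ) < d := by exact_mod_cast (by omega : 0 < d)
  have hd2 : (2:ℝ) ≤ d := by exact_mod_cast hd
  rcases hε.eq_or_lt with rfl | hε0
  · have hQ : (0:ℝ) < (d + 2) / n := by positivity
    have hprob : IsProbabilityMeasure (volume : Measure (EuclideanSpace ℝ (Fin d)))[|
        Metric.closedBall 0 (Real.sqrt ((d + 2) / n))] := by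
      refine cond_isProbabilityMeasure_of_finite ?_ ?_
      · exact (Metric.measure_closedBall_pos volume _ (Real.sqrt_pos.2 hQ)).ne'
      · exact measure_closedBall_lt_top.ne
    refine prob_le_one.trans ?_
    rw [ENNReal.one_le_ofReal]
    simp
    linarith
  obtain ⟨θ, hθ0, hθ3, hθ⟩ := final_exponent d n ε hd' hn' hε
  have h1 := one_tail hd hn θ (θ * ε) (by rw [abs_of_nonneg hθ0]; exact hθ3)
  have h2 := one_tail hd hn (-θ) (θ * ε) (by rw [abs_neg, abs_of_nonneg hθ0]; exact hθ3)
  rw [abs_neg, neg_sq, abs_of_nonneg hθ0, hθ] at h2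
  rw [abs_of_nonneg hθ0, hθ] at h1
  refine (measure_mono (t := _ ∪ _) ?_).trans ((measure_union_le _ _).trans (add_le_add h1 h2)) |>.trans ?_
  · intro x hx
    simp only [Set.mem_ofPred_eq] at hx
    rw [frameOperator_eq] at hx
    refine opNorm_trace _ ?_ ε θ hε0 hθ0 hx
    simp [Matrix.transpose_sum, Matrix.transpose_vecMulVec]
  · rw [← ENNReal.ofReal_add (by positivity) (by positivity)]
    apply ENNReal.ofReal_le_ofReal
    apply le_of_eq
    ring
end
end

section
/- There exists an absolute constant c > 0 such that for all integers d ≥ 2 and n ≥ 1 the following holds: if (x_i)_{i=1}^n are independent random vectors each drawn from the uniform probability measure on the closed Euclidean ball of radius sqrt((d+2)/n) in ℝ^d, and S = Σ_{i=1}^n x_i x_i^* is the associated frame operator, then for every ε ≥ 0, the probability that ‖S − I_d‖_F ≥ ε is at most d² · exp( − c n ε² / d³ ). -/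
open MeasureTheory ProbabilityTheory Real

noncomputable section

lemma cosh_sqrt_chord {p q w : ℝ} (hp : 0 ≤ p) (hq : 0 ≤ q) (hw : 0 ≤ w) (hw1 : w ≤ 1) :
    Real.cosh (√(w * p + (1 - w) * q)) ≤ w * Real.cosh (√p) + (1 - w) * Real.cosh (√q) := by
  have key : ∀ u : ℝ, 0 ≤ u → HasSum (fun n : ℕ => u ^ n / ((2 * n).factorial : ℝ)) (Real.cosh (√u)) := by
    intro u hu
    have := Real.hasSum_cosh (√u)
    simpa [pow_mul, Real.sq_sqrt hu] using this
  have h1w : 0 ≤ 1 - w := by linarith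
  refine hasSum_le (fun n => ?_) (key _ (by positivity))
    (((key p hp).mul_left w).add ((key q hq).mul_left (1 - w)))
  have h := (convexOn_pow (𝕜 := ℝ) n).2 (Set.mem_Ici.2 hp) (Set.mem_Ici.2 hq) hw h1w (by ring)
  simp only [smul_eq_mul] at h
  rw [← mul_div_assoc, ← mul_div_assoc, ← add_div]
  gcongr

lemma cosh_norm_step {H : Type*} [NormedAddCommGroup H] [InnerProductSpace ℝ H] (s X : H) {b : ℝ}
    (hb : 0 < b) (hX : ‖X‖ ≤ b) :
    Real.cosh ‖s + X‖ ≤ Real.cosh ‖s‖ * Real.cosh b +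
      (Real.sinh ‖s‖ * Real.sinh b / (‖s‖ * b)) * inner ℝ s X := by
  rcases eq_or_ne s 0 with rfl | hs
  · simp
    rw [abs_of_pos hb]; exact hX
  have hσ : 0 < ‖s‖ := norm_pos_iff.2 hs
  set σ := ‖s‖ with hσd
  set t := inner ℝ s X with ht
  have hti : |t| ≤ σ * b := (abs_real_inner_le_norm s X).trans (by gcongr)
  obtain ⟨ht1, ht2⟩ := abs_le.1 hti
  set w := 1 / 2 + t / (2 * (σ * b)) with hw
  have hσb : 0 < σ * b := by positivity
  have hw0 : 0 ≤ w := by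
    have : w = (σ * b + t) / (2 * (σ * b)) := by rw [hw]; field_simp
    rw [this]; apply div_nonneg <;> linarith
  have hw1 : w ≤ 1 := by
    have : 1 - w = (σ * b - t) / (2 * (σ * b)) := by rw [hw]; field_simp; ring
    have : 0 ≤ 1 - w := by rw [this]; apply div_nonneg <;> linarith
    linarith
  have h := cosh_sqrt_chord (sq_nonneg (σ + b)) (sq_nonneg (σ - b)) hw0 hw1
  have hu : w * (σ + b) ^ 2 + (1 - w) * (σ - b) ^ 2 = σ ^ 2 + b ^ 2 + 2 * t := by
    rw [hw]; field_simp; ring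
  rw [hu, Real.sqrt_sq_eq_abs, Real.sqrt_sq_eq_abs, Real.cosh_abs, Real.cosh_abs, Real.cosh_add,
    Real.cosh_sub] at h
  have h2 : Real.cosh ‖s + X‖ ≤ Real.cosh (√(σ ^ 2 + b ^ 2 + 2 * t)) := by
    rw [Real.cosh_le_cosh, abs_of_nonneg (norm_nonneg _), abs_of_nonneg (Real.sqrt_nonneg _)]
    apply Real.le_sqrt_of_sq_le
    rw [norm_add_sq_real]
    nlinarith [norm_nonneg X]
  refine h2.trans (h.trans (le_of_eq ?_))
  rw [hw]; field_simp; ring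

lemma one_step {E H : Type*} [MeasurableSpace E] [NormedAddCommGroup H] [InnerProductSpace ℝ H]
    (μ : Measure E) [IsProbabilityMeasure μ] (Y : E → H) {b : ℝ} (hb : 0 < b)
    (hYb : ∀ᵐ x ∂μ, ‖Y x‖ ≤ b) (hint : ∀ s, Integrable (fun x => inner ℝ s (Y x)) μ)
    (hmean : ∀ s, ∫ x, inner ℝ s (Y x) ∂μ = 0) (s : H) :
    ∫⁻ x, ENNReal.ofReal (Real.cosh ‖s + Y x‖) ∂μ ≤
      ENNReal.ofReal (Real.cosh ‖s‖ * Real.cosh b) := by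
  have hae : ∀ᵐ x ∂μ, Real.cosh ‖s + Y x‖ ≤ Real.cosh ‖s‖ * Real.cosh b +
      (Real.sinh ‖s‖ * Real.sinh b / (‖s‖ * b)) * inner ℝ s (Y x) := by
    filter_upwards [hYb] with x hx using cosh_norm_step s (Y x) hb hx
  have hi := (integrable_const (μ := μ) (Real.cosh ‖s‖ * Real.cosh b)).add
    ((hint s).const_mul (Real.sinh ‖s‖ * Real.sinh b / (‖s‖ * b)))
  calc _ ≤ ∫⁻ x, ENNReal.ofReal (Real.cosh ‖s‖ * Real.cosh b +
      (Real.sinh ‖s‖ * Real.sinh b / (‖s‖ * b)) * inner ℝ s (Y x)) ∂μ := by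
        apply lintegral_mono_ae
        filter_upwards [hae] with x hx using ENNReal.ofReal_le_ofReal hx
    _ = ENNReal.ofReal (∫ x, (Real.cosh ‖s‖ * Real.cosh b +
      (Real.sinh ‖s‖ * Real.sinh b / (‖s‖ * b)) * inner ℝ s (Y x)) ∂μ) := by
        refine (ofReal_integral_eq_lintegral_ofReal hi ?_).symm
        filter_upwards [hae] with x hx using (Real.cosh_pos _).le.trans hx
    _ = _ := by
        rw [integral_add (integrable_const _) ((hint s).const_mul _),
          integral_const_mul (Real.sinh ‖s‖ * Real.sinh b / (‖s‖ * b)), hmean]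
        simp

lemma n_step {E H : Type*} [MeasurableSpace E] [NormedAddCommGroup H] [InnerProductSpace ℝ H]
    [MeasurableSpace H] [BorelSpace H] [SecondCountableTopology H]
    (μ : Measure E) [IsProbabilityMeasure μ] (Y : E → H) (hY : Measurable Y) {b : ℝ} (hb : 0 < b)
    (hYb : ∀ᵐ x ∂μ, ‖Y x‖ ≤ b) (hint : ∀ s, Integrable (fun x => inner ℝ s (Y x)) μ)
    (hmean : ∀ s, ∫ x, inner ℝ s (Y x) ∂μ = 0) (n : ℕ) : ∀ s : H,
    ∫⁻ x, ENNReal.ofReal (Real.cosh ‖s + ∑ i, Y (x i)‖) ∂(Measure.pi fun _ : Fin n => μ) ≤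
      ENNReal.ofReal (Real.cosh ‖s‖ * Real.cosh b ^ n) := by
  induction n with
  | zero => intro s; simp
  | succ n ih =>
    intro s
    have mp := measurePreserving_piFinSuccAbove (fun _ : Fin (n + 1) => μ) 0
    have hm : Measurable fun z : E × (Fin n → E) =>
        ENNReal.ofReal (Real.cosh ‖(s + Y z.1) + ∑ i, Y (z.2 i)‖) := by
      have : Measurable fun z : E × (Fin n → E) => (s + Y z.1) + ∑ i, Y (z.2 i) := by fun_prop
      exact (Real.continuous_cosh.measurable.comp this.norm).ennreal_ofReal
    have e := mp.lintegral_comp hm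
    have : ∀ x : Fin (n + 1) → E, ENNReal.ofReal (Real.cosh ‖s + ∑ i, Y (x i)‖) =
        ENNReal.ofReal (Real.cosh ‖(s + Y ((MeasurableEquiv.piFinSuccAbove (fun _ => E) 0) x).1) +
          ∑ i, Y (((MeasurableEquiv.piFinSuccAbove (fun _ => E) 0) x).2 i)‖) := by
      intro x
      rw [Fin.sum_univ_succ, ← add_assoc]
      rfl
    simp_rw [this]
    rw [e, lintegral_prod _ hm.aemeasurable]
    calc _ ≤ ∫⁻ x, ENNReal.ofReal (Real.cosh ‖s + Y x‖) * ENNReal.ofReal (Real.cosh b ^ n) ∂μ := by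
          apply lintegral_mono
          intro x
          beta_reduce
          rw [← ENNReal.ofReal_mul (Real.cosh_pos _).le]
          exact ih (s + Y x)
      _ = (∫⁻ x, ENNReal.ofReal (Real.cosh ‖s + Y x‖) ∂μ) * ENNReal.ofReal (Real.cosh b ^ n) := by
          rw [lintegral_mul_const']
          simp
      _ ≤ ENNReal.ofReal (Real.cosh ‖s‖ * Real.cosh b) * ENNReal.ofReal (Real.cosh b ^ n) := by
          gcongr
          exact one_step μ Y hb hYb hint hmean s
      _ = _ := by
          rw [← ENNReal.ofReal_mul (by positivity)]
          ring_nf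

lemma hilbert_hoeffding {E H : Type*} [MeasurableSpace E] [NormedAddCommGroup H]
    [InnerProductSpace ℝ H]
    [MeasurableSpace H] [BorelSpace H] [SecondCountableTopology H]
    (μ : Measure E) [IsProbabilityMeasure μ] (Y : E → H) (hY : Measurable Y) {b : ℝ} (hb : 0 < b)
    (hYb : ∀ᵐ x ∂μ, ‖Y x‖ ≤ b) (hint : ∀ s, Integrable (fun x => inner ℝ s (Y x)) μ)
    (hmean : ∀ s, ∫ x, inner ℝ s (Y x) ∂μ = 0) (n : ℕ) {r ε : ℝ} (hr : 0 < r) :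
    (Measure.pi fun _ : Fin n => μ) {x | ε ≤ ‖∑ i, Y (x i)‖} ≤
      ENNReal.ofReal (2 * Real.exp (n * (r * b) ^ 2 / 2 - r * ε)) := by
  have h := n_step μ (fun x => r • Y x) (hY.const_smul r) (b := r * b) (by positivity)
    (by filter_upwards [hYb] with x hx
        rw [norm_smul, Real.norm_of_nonneg hr.le]; gcongr)
    (by intro s; simp_rw [inner_smul_right]; exact (hint s).const_mul r)
    (by intro s; simp_rw [inner_smul_right]; rw [integral_const_mul, hmean, mul_zero]) n 0
  simp only [zero_add, norm_zero, Real.cosh_zero, one_mul, ← Finset.smul_sum, norm_smul,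
    Real.norm_of_nonneg hr.le] at h
  have hc : Real.cosh (r * b) ^ n ≤ Real.exp (n * (r * b) ^ 2 / 2) := by
    calc _ ≤ (Real.exp ((r * b) ^ 2 / 2)) ^ n := by
          gcongr
          exact Real.cosh_le_exp_half_sq _
      _ = _ := by rw [← Real.exp_nat_mul]; ring_nf
  have hpos : 0 < Real.exp (r * ε) / 2 := by positivity
  have hmk := mul_meas_ge_le_lintegral₀ (μ := Measure.pi fun _ : Fin n => μ)
    (f := fun x => ENNReal.ofReal (Real.cosh (r * ‖∑ i, Y (x i)‖)))
    (by
      have : Measurable fun z : (Fin n → E) => ∑ i, Y (z i) := by fun_prop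
      exact ((Real.continuous_cosh.measurable.comp
        (this.norm.const_mul r)).ennreal_ofReal).aemeasurable)
    (ENNReal.ofReal (Real.exp (r * ε) / 2))
  have hsub : {x : Fin n → E | ε ≤ ‖∑ i, Y (x i)‖} ⊆
      {x | ENNReal.ofReal (Real.exp (r * ε) / 2) ≤
        ENNReal.ofReal (Real.cosh (r * ‖∑ i, Y (x i)‖))} := by
    intro x hx
    simp only [Set.mem_ofPred_eq] at hx ⊢
    apply ENNReal.ofReal_le_ofReal
    rw [Real.cosh_eq]
    have : Real.exp (r * ε) ≤ Real.exp (r * ‖∑ i, Y (x i)‖) := by gcongr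
    have := Real.exp_pos (-(r * ‖∑ i, Y (x i)‖))
    linarith
  refine (measure_mono hsub).trans ?_
  have h3 := (hmk.trans h).trans (ENNReal.ofReal_le_ofReal hc)
  rw [mul_comm] at h3
  rw [← ENNReal.le_div_iff_mul_le (by left; simpa using hpos) (by simp),
    ← ENNReal.ofReal_div_of_pos hpos] at h3
  refine h3.trans (ENNReal.ofReal_le_ofReal (le_of_eq ?_))
  rw [Real.exp_sub]
  field_simp

lemma setIntegral_closedBall_isometry {d : ℕ} (R : ℝ)
    (T : EuclideanSpace ℝ (Fin d) ≃ₗᵢ[ℝ] EuclideanSpace ℝ (Fin d))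
    (f : EuclideanSpace ℝ (Fin d) → ℝ) :
    ∫ x in Metric.closedBall (0 : EuclideanSpace ℝ (Fin d)) R, f (T x) =
      ∫ x in Metric.closedBall (0 : EuclideanSpace ℝ (Fin d)) R, f x := by
  have h := T.measurePreserving.setIntegral_preimage_emb
    T.toMeasurableEquiv.measurableEmbedding f (Metric.closedBall 0 R)
  rw [← h]
  congr 2
  ext x
  simp

lemma setIntegral_offdiag {d : ℕ} (R : ℝ) {j k : Fin d} (hjk : j ≠ k) :
    ∫ x in Metric.closedBall (0 : EuclideanSpace ℝ (Fin d)) R, x j * x k = 0 := by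
  have h := setIntegral_closedBall_isometry R
    (LinearIsometryEquiv.piLpCongrRight 2 (fun i : Fin d =>
      if i = j then LinearIsometryEquiv.neg ℝ else LinearIsometryEquiv.refl ℝ ℝ))
    (fun x => x j * x k)
  simp [hjk.symm, LinearIsometryEquiv.piLpCongrRight_apply, integral_neg] at h
  linarith

lemma setIntegral_diag_eq {d : ℕ} (R : ℝ) (j k : Fin d) :
    ∫ x in Metric.closedBall (0 : EuclideanSpace ℝ (Fin d)) R, x j * x j =
    ∫ x in Metric.closedBall (0 : EuclideanSpace ℝ (Fin d)) R, x k * x k := by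
  have h := setIntegral_closedBall_isometry R
    (LinearIsometryEquiv.piLpCongrLeft 2 ℝ ℝ (Equiv.swap j k))
    (fun x => x j * x j)
  simp [LinearIsometryEquiv.piLpCongrLeft_apply, Equiv.piCongrLeft'] at h
  exact h.symm

lemma setIntegral_norm_sq {d : ℕ} (hd : 2 ≤ d) {R : ℝ} (hR : 0 ≤ R) :
    ∫ x in Metric.closedBall (0 : EuclideanSpace ℝ (Fin d)) R, ‖x‖ ^ 2 =
      d * (R ^ 2 / (d + 2)) *
        (volume : Measure (EuclideanSpace ℝ (Fin d))).real (Metric.closedBall 0 R) := by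
  haveI : NeZero d := ⟨by omega⟩
  haveI : Nontrivial (EuclideanSpace ℝ (Fin d)) := inferInstance
  have h := integral_fun_norm_addHaar (volume : Measure (EuclideanSpace ℝ (Fin d)))
    (fun y => (Set.Iic R).indicator (fun y => y ^ 2) y)
  have e1 : ∫ x in Metric.closedBall (0 : EuclideanSpace ℝ (Fin d)) R, ‖x‖ ^ 2 =
      ∫ x : EuclideanSpace ℝ (Fin d), (Set.Iic R).indicator (fun y => y ^ 2) ‖x‖ := by
    rw [← integral_indicator Metric.isClosed_closedBall.measurableSet]
    congr 1
    ext x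
    by_cases hx : ‖x‖ ≤ R
    · rw [Set.indicator_of_mem (by simpa using hx), Set.indicator_of_mem (by simpa using hx)]
    · rw [Set.indicator_of_notMem (by simpa using hx), Set.indicator_of_notMem (by simpa using hx)]
  have e2 : ∫ y in Set.Ioi (0 : ℝ), y ^ (d - 1) • (Set.Iic R).indicator (fun y => y ^ 2) y =
      R ^ (d + 2) / (d + 2) := by
    have : ∀ y : ℝ, y ^ (d - 1) • (Set.Iic R).indicator (fun y => y ^ 2) y =
        (Set.Iic R).indicator (fun y => y ^ (d + 1)) y := by
      intro y
      by_cases hy : y ≤ R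
      · simp only [Set.indicator_apply, Set.mem_Iic, hy, if_true, smul_eq_mul, ← pow_add]
        congr 1; omega
      · simp [Set.indicator_apply, hy]
    simp_rw [this]
    rw [setIntegral_indicator measurableSet_Iic, Set.Ioi_inter_Iic,
      ← intervalIntegral.integral_of_le hR, integral_pow]
    push_cast
    simp
    ring
  rw [e1, h, finrank_euclideanSpace_fin, e2, Measure.addHaar_real_closedBall _ _ hR,
    finrank_euclideanSpace_fin]
  simp only [nsmul_eq_mul, smul_eq_mul]
  ring

lemma integrableOn_coord {d : ℕ} (R : ℝ) (j k : Fin d) :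
    IntegrableOn (fun x : EuclideanSpace ℝ (Fin d) => x j * x k) (Metric.closedBall 0 R) := by
  apply ContinuousOn.integrableOn_compact (isCompact_closedBall 0 R)
  fun_prop

lemma setIntegral_diag {d : ℕ} (hd : 2 ≤ d) {R : ℝ} (hR : 0 ≤ R) (j : Fin d) :
    ∫ x in Metric.closedBall (0 : EuclideanSpace ℝ (Fin d)) R, x j * x j =
      R ^ 2 / (d + 2) *
        (volume : Measure (EuclideanSpace ℝ (Fin d))).real (Metric.closedBall 0 R) := by
  have h := setIntegral_norm_sq hd hR
  simp_rw [EuclideanSpace.real_norm_sq_eq, pow_two (_ : ℝ)] at h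
  rw [integral_finsetSum _ (fun i _ => integrableOn_coord R i i)] at h
  simp_rw [fun i => setIntegral_diag_eq R i j] at h
  simp only [Finset.sum_const, Finset.card_univ, Fintype.card_fin, nsmul_eq_mul] at h
  have hd0 : (d : ℝ) ≠ 0 := by positivity
  rw [mul_assoc (d : ℝ)] at h
  rw [pow_two]
  exact mul_left_cancel₀ hd0 h

/-- The centred rank-one operator, as a vector indexed by matrix entries. -/
def centredRankOne (d n : ℕ) (x : EuclideanSpace ℝ (Fin d)) :
    EuclideanSpace ℝ (Fin d × Fin d) :=
  WithLp.toLp 2 fun p => x p.1 * x p.2 - (if p.1 = p.2 then (1 : ℝ) else 0) / n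

lemma norm_sum_centredRankOne {d n : ℕ} (hn : 1 ≤ n) (x : Fin n → EuclideanSpace ℝ (Fin d)) :
    ‖∑ i, centredRankOne d n (x i)‖ = frobNormFrameOpSubId x := by
  have hn0 : (n : ℝ) ≠ 0 := by positivity
  rw [EuclideanSpace.norm_eq, frobNormFrameOpSubId, Fintype.sum_prod_type]
  congr 1
  refine Finset.sum_congr rfl fun j _ => Finset.sum_congr rfl fun k _ => ?_
  rw [Real.norm_eq_abs, sq_abs]
  congr 1
  simp only [centredRankOne, WithLp.ofLp_sum, Finset.sum_apply, Finset.sum_sub_distrib,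
    Finset.sum_const, Finset.card_univ, Fintype.card_fin, nsmul_eq_mul]
  rw [mul_div_cancel₀ _ hn0]

lemma norm_centredRankOne_le {d n : ℕ} (hd : 2 ≤ d) (hn : 1 ≤ n) (x : EuclideanSpace ℝ (Fin d))
    (hx : ‖x‖ ^ 2 ≤ (d + 2) / n) : ‖centredRankOne d n x‖ ≤ 3 * d / n := by
  have hn0 : (0 : ℝ) < n := by positivity
  have hd2 : (2 : ℝ) ≤ d := by exact_mod_cast hd
  apply le_of_sq_le_sq _ (by positivity)
  have e : ‖centredRankOne d n x‖ ^ 2 = (‖x‖ ^ 2) ^ 2 - 2 * ‖x‖ ^ 2 / n + d / n ^ 2 := by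
    rw [EuclideanSpace.real_norm_sq_eq, Fintype.sum_prod_type, EuclideanSpace.real_norm_sq_eq]
    have : ∀ j k : Fin d, (centredRankOne d n x (j, k)) ^ 2 =
        x j ^ 2 * x k ^ 2 - (if j = k then 2 * (x j * x k) / n - 1 / n ^ 2 else 0) := by
      intro j k
      by_cases h : j = k <;> simp [centredRankOne, h] <;> ring
    simp_rw [this]
    simp only [Finset.sum_sub_distrib, Finset.sum_ite_eq, Finset.mem_univ, if_true,
      ← Finset.mul_sum, ← Finset.sum_mul, ← Finset.sum_div, Finset.sum_const, Finset.card_univ,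
      Fintype.card_fin, nsmul_eq_mul, ← pow_two]
    ring
  rw [e]
  have h1 : (‖x‖ ^ 2) ^ 2 ≤ ((d + 2) / n : ℝ) ^ 2 := by gcongr
  have h2 : 0 ≤ 2 * ‖x‖ ^ 2 / n := by positivity
  have h3 : ((d + 2) / n : ℝ) ^ 2 + d / n ^ 2 ≤ (3 * d / n) ^ 2 := by
    rw [div_pow, div_pow, ← add_div]
    gcongr
    nlinarith
  linarith

theorem ball_concentration_frobeniusNorm :
    ∃ c : ℝ, 0 < c ∧
      ∀ (d n : ℕ), 2 ≤ d → 1 ≤ n → ∀ ε : ℝ, 0 ≤ ε →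
        (Measure.pi fun _ : Fin n =>
            (volume : Measure (EuclideanSpace ℝ (Fin d)))[|
              Metric.closedBall (0 : EuclideanSpace ℝ (Fin d))
                (Real.sqrt ((d + 2) / n))])
            {x | ε ≤ frobNormFrameOpSubId x}
          ≤ ENNReal.ofReal
              ((d : ℝ) ^ 2 * Real.exp (-(c * n * ε ^ 2) / d ^ 3)) := by
  refine ⟨1 / 18, by norm_num, ?_⟩
  intro d n hd hn ε hε
  have hn0 : (0 : ℝ) < n := by positivity
  have hd2 : (2 : ℝ) ≤ d := by exact_mod_cast hd
  set R : ℝ := Real.sqrt ((d + 2) / n) with hRdef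
  have hR : 0 < R := Real.sqrt_pos.2 (by positivity)
  have hR2 : R ^ 2 = (d + 2) / n := Real.sq_sqrt (by positivity)
  set B := Metric.closedBall (0 : EuclideanSpace ℝ (Fin d)) R with hB
  have hBpos : volume B ≠ 0 := (Metric.measure_closedBall_pos volume _ hR).ne'
  have hBtop : volume B ≠ ⊤ := measure_closedBall_lt_top.ne
  haveI : IsProbabilityMeasure ((volume : Measure (EuclideanSpace ℝ (Fin d)))[|B]) :=
    cond_isProbabilityMeasure_of_finite hBpos hBtop
  set μ := (volume : Measure (EuclideanSpace ℝ (Fin d)))[|B] with hμ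
  have hBm : MeasurableSet B := Metric.isClosed_closedBall.measurableSet
  have hBreal : (volume : Measure (EuclideanSpace ℝ (Fin d))).real B ≠ 0 :=
    (ENNReal.toReal_pos hBpos hBtop).ne'
  have hint0 : ∀ j k : Fin d, Integrable (fun x : EuclideanSpace ℝ (Fin d) => x j * x k) μ := by
    intro j k
    exact (integrableOn_coord R j k).integrable.smul_measure (ENNReal.inv_ne_top.2 hBpos)
  have hmean0 : ∀ j k : Fin d, ∫ x, x j * x k ∂μ = (if j = k then (1 : ℝ) else 0) / n := by
    intro j k
    rw [hμ, ProbabilityTheory.cond, integral_smul_measure]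
    split_ifs with h
    · subst h
      rw [setIntegral_diag hd hR.le, hR2, ENNReal.toReal_inv, smul_eq_mul]
      change (volume.real B)⁻¹ * (_ * volume.real B) = _
      field_simp
    · rw [setIntegral_offdiag R h]; simp
  have hint1 : ∀ p : Fin d × Fin d, Integrable (fun x => centredRankOne d n x p) μ :=
    fun p => (hint0 p.1 p.2).sub (integrable_const _)
  have hmean1 : ∀ p : Fin d × Fin d, ∫ x, centredRankOne d n x p ∂μ = 0 := by
    intro p
    have := integral_sub (hint0 p.1 p.2)
      (integrable_const (μ := μ) ((if p.1 = p.2 then (1 : ℝ) else 0) / n))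
    rw [hmean0] at this
    simp only [integral_const, probReal_univ, one_smul, sub_self] at this
    exact this
  have hinner : ∀ (s : EuclideanSpace ℝ (Fin d × Fin d)) x,
      inner ℝ s (centredRankOne d n x) = ∑ p, s p * centredRankOne d n x p := by
    intro s x
    rw [PiLp.inner_apply]
    simp [mul_comm]
  have hmeas : Measurable (centredRankOne d n) := by
    unfold centredRankOne
    fun_prop
  have key := fun (r : ℝ) (hr : 0 < r) => hilbert_hoeffding μ (centredRankOne d n) hmeas
    (b := 3 * d / n) (by positivity)
    (by
      filter_upwards [ae_cond_mem hBm] with x hx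
      apply norm_centredRankOne_le hd hn
      rw [← hR2]
      have : ‖x‖ ≤ R := by simpa [hB] using hx
      gcongr)
    (by
      intro s
      simp_rw [hinner]
      exact integrable_finsetSum _ fun p _ => (hint1 p).const_mul _)
    (by
      intro s
      simp_rw [hinner]
      rw [integral_finsetSum _ fun p _ => (hint1 p).const_mul _]
      simp [integral_const_mul, hmean1]) n (r := r) (ε := ε) hr
  simp_rw [norm_sum_centredRankOne hn] at key
  rcases hε.eq_or_lt with rfl | hε
  · refine prob_le_one.trans ?_
    rw [← ENNReal.ofReal_one]
    apply ENNReal.ofReal_le_ofReal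
    simp
    nlinarith
  refine (key (ε * n / (9 * d ^ 2)) (by positivity)).trans (ENNReal.ofReal_le_ofReal ?_)
  gcongr
  · nlinarith
  · have : n * (ε * n / (9 * d ^ 2) * (3 * d / n)) ^ 2 / 2 - ε * n / (9 * d ^ 2) * ε
        = -(1 / 18 * n * ε ^ 2) / d ^ 2 := by
      field_simp; ring
    rw [this, neg_div, neg_div]
    gcongr
    · linarith
    · norm_num
end
end
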